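/- arXiv:1501.03889 — 2 statements merged into one kernel-verified Lean document; each statement's English description precedes it below -/
import Mathlib

section
/- Suppose j ⊆ ω with p_j < p_ω < n, the candidate model j is overspecified, and y ~ N_n(X(ω)β*, σ*²Σ). Then the ratio σ̂_ω²/σ̂_j² follows the Beta distribution Be((n − p_ω)/2, (p_ω − p_j)/2). -/
/-!
Write `Σ⁻¹ = Lᵀ L` with `L` invertible and whiten: `w = σ*⁻¹ L (y - X(ω)β*)` is a standard normal
vector (`map_whiten_gaussDensity`). In whitened coordinates GLS fitting is orthogonal projection
onto the column space of `L X(k)`. Since the mean lies in the column space of both `X(j)` and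
`X(ω)`, both weighted residual sums of squares are `σ*²` times the squared length of the component
of `w` orthogonal to the respective space (`gls_residual_form`).

The column space `V₁` of `L X(j)` is contained in the column space `V₂` of `L X(ω)`. In an
orthonormal basis adapted to `V₁ ≤ V₂` (`exists_adapted_orthonormalBasis`) the coordinates of `w`
are again independent standard normals (`map_orthonormalBasis_coords`), and the ratio of the
variance estimators becomes `U / (U + W)`, where `U` is the sum of the `n - p_ω` squared coordinates
orthogonal to `V₂` and `W` the sum of the `p_ω - p_j` squared coordinates in `V₁ᗮ ⊓ V₂`. These are
independent chi-squared variables, so the ratio is beta distributed (`map_ratio_pi_gaussianReal`),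
by the beta-gamma change of variables `map_ratio_sum_gamma`.
-/

open Matrix MeasureTheory Real Filter Asymptotics

noncomputable section

/-- The covariate-shift linear mixed model setup of Kawakubo–Sugasawa–Kubokawa:
observed model `y ~ N_n(X(ω)β*, σ*²Σ)` with `Σ = Z G Zᵀ + R`, a candidate model
given by a subset of the columns of `X(ω)` (encoded by an embedding
`emb : Fin pj ↪ Fin pw`), and a predictive model with covariate matrices
`X̃(ω)`, `Z̃` and error covariance matrix `R̃`. -/
structure CSModel (pw pj : ℕ) (n : ℕ) where
  q : ℕ
  m : ℕ
  /-- design matrix `X(ω)` of the full model -/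
  Xw : Matrix (Fin n) (Fin pw) ℝ
  /-- the subset `j ⊆ {1,…,p_ω}` with `p_j` elements, as an embedding -/
  emb : Fin pj ↪ Fin pw
  Z : Matrix (Fin n) (Fin q) ℝ
  Gm : Matrix (Fin q) (Fin q) ℝ
  Rm : Matrix (Fin n) (Fin n) ℝ
  /-- true regression coefficients `β*` -/
  beta : Fin pw → ℝ
  /-- true variance `σ*²` -/
  sig2 : ℝ
  /-- predictive-model covariates `X̃(ω)` -/
  Xtw : Matrix (Fin m) (Fin pw) ℝ
  Zt : Matrix (Fin m) (Fin q) ℝ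
  Rt : Matrix (Fin m) (Fin m) ℝ
  hG : Gm.PosDef
  hR : Rm.PosDef
  hRt : Rt.PosDef
  hsig : 0 < sig2
  hrankw : Xw.rank = pw
  hrankj : (Xw.submatrix id ⇑emb).rank = pj

namespace CSModel

variable {pw pj n : ℕ} (M : CSModel pw pj n)

/-- `X(j)`: the columns of `X(ω)` indexed by `j`. -/
def Xj : Matrix (Fin n) (Fin pj) ℝ := M.Xw.submatrix id ⇑M.emb

/-- `X̃(j)`: the columns of `X̃(ω)` indexed by `j`. -/
def Xtj : Matrix (Fin M.m) (Fin pj) ℝ := M.Xtw.submatrix id ⇑M.emb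

/-- `Σ = Z G Zᵀ + R`. -/
def Sig : Matrix (Fin n) (Fin n) ℝ := M.Z * M.Gm * M.Zᵀ + M.Rm

/-- `Σ̃ = Z̃ G Z̃ᵀ + R̃`. -/
def Sigt : Matrix (Fin M.m) (Fin M.m) ℝ := M.Zt * M.Gm * M.Ztᵀ + M.Rt

/-- `Λ = Σ̃ − Z̃GZᵀΣ⁻¹ZGZ̃ᵀ`. -/
def Lam : Matrix (Fin M.m) (Fin M.m) ℝ :=
  M.Sigt - M.Zt * M.Gm * M.Zᵀ * M.Sig⁻¹ * M.Z * M.Gm * M.Ztᵀ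

/-- `A = X̃(j) − Z̃GZᵀΣ⁻¹X(j)`. -/
def Amat : Matrix (Fin M.m) (Fin pj) ℝ := M.Xtj - M.Zt * M.Gm * M.Zᵀ * M.Sig⁻¹ * M.Xj

/-- the GLS matrix `(X(j)ᵀΣ⁻¹X(j))⁻¹X(j)ᵀΣ⁻¹` of the candidate model. -/
def gls : Matrix (Fin pj) (Fin n) ℝ := (M.Xjᵀ * M.Sig⁻¹ * M.Xj)⁻¹ * M.Xjᵀ * M.Sig⁻¹

/-- `β̂_j = (X(j)ᵀΣ⁻¹X(j))⁻¹X(j)ᵀΣ⁻¹ y`. -/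
def betaHat (y : Fin n → ℝ) : Fin pj → ℝ := M.gls *ᵥ y

/-- the residual `y − X(j)β̂_j`. -/
def resid (y : Fin n → ℝ) : Fin n → ℝ := y - M.Xj *ᵥ M.betaHat y

/-- `σ̂_j² = (y − X(j)β̂_j)ᵀΣ⁻¹(y − X(j)β̂_j)/n`. -/
def sigHat2 (y : Fin n → ℝ) : ℝ := (M.resid y ⬝ᵥ (M.Sig⁻¹ *ᵥ M.resid y)) / n

/-- the GLS matrix of the full model. -/
def glsw : Matrix (Fin pw) (Fin n) ℝ := (M.Xwᵀ * M.Sig⁻¹ * M.Xw)⁻¹ * M.Xwᵀ * M.Sig⁻¹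

/-- the full-model GLS estimator `β̃ = β̂_ω`. -/
def betaTilde (y : Fin n → ℝ) : Fin pw → ℝ := M.glsw *ᵥ y

/-- the full-model residual `y − X(ω)β̃`. -/
def residw (y : Fin n → ℝ) : Fin n → ℝ := y - M.Xw *ᵥ M.betaTilde y

/-- `σ̂_ω²`, the ML variance estimator of the full model. -/
def sigHatw2 (y : Fin n → ℝ) : ℝ := (M.residw y ⬝ᵥ (M.Sig⁻¹ *ᵥ M.residw y)) / n

/-- `σ̃² = (y − X(ω)β̃)ᵀΣ⁻¹(y − X(ω)β̃)/(n−p_ω)`, the unbiased full-model estimator. -/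
def sigTilde2 (y : Fin n → ℝ) : ℝ :=
  (M.residw y ⬝ᵥ (M.Sig⁻¹ *ᵥ M.residw y)) / ((n : ℝ) - pw)

/-- the empirical Bayes predictor `b̂_j = GZᵀΣ⁻¹(y − X(j)β̂_j)`. -/
def bHat (y : Fin n → ℝ) : Fin M.q → ℝ := (M.Gm * M.Zᵀ * M.Sig⁻¹) *ᵥ M.resid y

/-- `a = (X̃(j)β̂_j − X̃(ω)β*) − Z̃GZᵀΣ⁻¹(X(j)β̂_j − X(ω)β*)`. -/
def avec (y : Fin n → ℝ) : Fin M.m → ℝ :=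
  (M.Xtj *ᵥ M.betaHat y - M.Xtw *ᵥ M.beta)
    - (M.Zt * M.Gm * M.Zᵀ * M.Sig⁻¹) *ᵥ (M.Xj *ᵥ M.betaHat y - M.Xw *ᵥ M.beta)

/-- `γ = tr(R̃⁻¹Λ) + tr[R̃⁻¹A(X(j)ᵀΣ⁻¹X(j))⁻¹Aᵀ]`. -/
def gam : ℝ :=
  (M.Rt⁻¹ * M.Lam).trace + (M.Rt⁻¹ * M.Amat * (M.Xjᵀ * M.Sig⁻¹ * M.Xj)⁻¹ * M.Amatᵀ).trace

/-- `P_j = Σ⁻¹X(j)(X(j)ᵀΣ⁻¹X(j))⁻¹X(j)ᵀΣ⁻¹`. -/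
def Pj : Matrix (Fin n) (Fin n) ℝ :=
  M.Sig⁻¹ * M.Xj * (M.Xjᵀ * M.Sig⁻¹ * M.Xj)⁻¹ * M.Xjᵀ * M.Sig⁻¹

/-- `P_ω = Σ⁻¹X(ω)(X(ω)ᵀΣ⁻¹X(ω))⁻¹X(ω)ᵀΣ⁻¹`. -/
def Pw : Matrix (Fin n) (Fin n) ℝ :=
  M.Sig⁻¹ * M.Xw * (M.Xwᵀ * M.Sig⁻¹ * M.Xw)⁻¹ * M.Xwᵀ * M.Sig⁻¹

/-- `P̃_j = X̃(j)(X(j)ᵀΣ⁻¹X(j))⁻¹X(j)ᵀΣ⁻¹`. -/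
def Ptj : Matrix (Fin M.m) (Fin n) ℝ :=
  M.Xtj * (M.Xjᵀ * M.Sig⁻¹ * M.Xj)⁻¹ * M.Xjᵀ * M.Sig⁻¹

/-- `B = P̃_jX(ω) − X̃(ω) + Z̃GZᵀ(P_ω − P_j)X(ω)`. -/
def Bmat : Matrix (Fin M.m) (Fin pw) ℝ :=
  M.Ptj * M.Xw - M.Xtw + M.Zt * M.Gm * M.Zᵀ * (M.Pw - M.Pj) * M.Xw

/-- `C = X(ω)ᵀ(P_ω − P_j)X(ω)`. -/
def Cmat : Matrix (Fin pw) (Fin pw) ℝ := M.Xwᵀ * (M.Pw - M.Pj) * M.Xw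

/-- `δ = β*ᵀCβ*/(nσ*²)`. -/
def delta : ℝ := (M.beta ⬝ᵥ (M.Cmat *ᵥ M.beta)) / ((n : ℝ) * M.sig2)

/-- `λ = 1/(1+δ)`. -/
def lam : ℝ := 1 / (1 + M.delta)

/-- the candidate model is overspecified: `X(ω)β*` lies in the column space of `X(j)`. -/
def Overspec : Prop := ∃ c : Fin pj → ℝ, M.Xw *ᵥ M.beta = M.Xj *ᵥ c

/-- the density of the multivariate normal `N_k(μ, s·S)`. -/
def gaussDensity {k : ℕ} (mu : Fin k → ℝ) (s : ℝ) (S : Matrix (Fin k) (Fin k) ℝ)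
    (y : Fin k → ℝ) : ℝ :=
  Real.exp (-((y - mu) ⬝ᵥ (S⁻¹ *ᵥ (y - mu))) / (2 * s)) /
    Real.sqrt ((2 * π * s) ^ k * S.det)

/-- expectation of `h` under the marginal distribution `y ~ N_n(X(ω)β*, σ*²Σ)`. -/
def E (h : (Fin n → ℝ) → ℝ) : ℝ :=
  ∫ y : Fin n → ℝ, h y * gaussDensity (M.Xw *ᵥ M.beta) M.sig2 M.Sig y

/-- the conditional Akaike information under covariate shift,
`cAI = E[m log(2πσ̂_j²) + log|R̃| + tr(R̃⁻¹Λ)σ*²/σ̂_j² + aᵀR̃⁻¹a/σ̂_j²]`. -/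
def cAI : ℝ :=
  M.E (fun y => (M.m : ℝ) * Real.log (2 * π * M.sigHat2 y) + Real.log M.Rt.det
    + (M.Rt⁻¹ * M.Lam).trace * M.sig2 / M.sigHat2 y
    + (M.avec y ⬝ᵥ (M.Rt⁻¹ *ᵥ M.avec y)) / M.sigHat2 y)

/-- `R* = nγ/(n − p_j − 2)`. -/
def Rstar : ℝ := (n : ℝ) * M.gam / ((n : ℝ) - pj - 2)

/-- `R₁ = γ(λ − 1)`. -/
def R1 : ℝ := M.gam * (M.lam - 1)

/-- `R₂ = γ·n⁻¹{−2λ³ + (p_j+4)λ² − (p_j+2)}`. -/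
def R2 : ℝ := M.gam * (-2 * M.lam ^ 3 + ((pj : ℝ) + 4) * M.lam ^ 2 - ((pj : ℝ) + 2)) / n

/-- the quadratic form `bᵀBᵀR̃⁻¹Bb`. -/
def quadB (b : Fin pw → ℝ) : ℝ := b ⬝ᵥ ((M.Bmatᵀ * M.Rt⁻¹ * M.Bmat) *ᵥ b)

/-- `R₃ = λ·β*ᵀBᵀR̃⁻¹Bβ*/σ*²`. -/
def R3 : ℝ := M.lam * M.quadB M.beta / M.sig2

/-- `R₄ = n⁻¹{−2λ³ + (p_j+4)λ²}·β*ᵀBᵀR̃⁻¹Bβ*/σ*²`. -/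
def R4 : ℝ := (-2 * M.lam ^ 3 + ((pj : ℝ) + 4) * M.lam ^ 2) * M.quadB M.beta / M.sig2 / n

/-- `δ(η)` as a function of `η = (β, σ²)`. -/
def deltaF (b : Fin pw → ℝ) (s : ℝ) : ℝ := (b ⬝ᵥ (M.Cmat *ᵥ b)) / ((n : ℝ) * s)

/-- `λ(η) = 1/(1+δ(η))`. -/
def lamF (b : Fin pw → ℝ) (s : ℝ) : ℝ := 1 / (1 + M.deltaF b s)

/-- `R₃(η) = λ(η)·βᵀBᵀR̃⁻¹Bβ/σ²`. -/
def R3F (b : Fin pw → ℝ) (s : ℝ) : ℝ := M.lamF b s * M.quadB b / s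

/-- `R₄(η) = n⁻¹{−2λ(η)³ + (p_j+4)λ(η)²}·βᵀBᵀR̃⁻¹Bβ/σ²`. -/
def R4F (b : Fin pw → ℝ) (s : ℝ) : ℝ :=
  (-2 * (M.lamF b s) ^ 3 + ((pj : ℝ) + 4) * (M.lamF b s) ^ 2) * M.quadB b / s / n

/-- `D = BᵀR̃⁻¹B`. -/
def Dmat : Matrix (Fin pw) (Fin pw) ℝ := M.Bmatᵀ * M.Rt⁻¹ * M.Bmat

/-- `∂²R₃/∂β∂βᵀ` (closed form, Lemma 2). -/
def hessBeta (b : Fin pw → ℝ) (s : ℝ) : Matrix (Fin pw) (Fin pw) ℝ :=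
  (M.quadB b / s) •
      ((-(2 / ((n : ℝ) * s * (1 + M.deltaF b s) ^ 2))) • M.Cmat
        + (8 / ((n : ℝ) ^ 2 * s ^ 2 * (1 + M.deltaF b s) ^ 3)) •
            vecMulVec (M.Cmat *ᵥ b) (M.Cmatᵀ *ᵥ b))
    - ((4 / ((n : ℝ) * s ^ 2 * (1 + M.deltaF b s) ^ 2)) •
        (vecMulVec (M.Dmat *ᵥ b) (M.Cmatᵀ *ᵥ b) + vecMulVec (M.Cmat *ᵥ b) (M.Dmatᵀ *ᵥ b)))
    + (2 * M.lamF b s / s) • M.Dmat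

/-- `∂²R₃/(∂σ²)²` (closed form, Lemma 2). -/
def hessSig (b : Fin pw → ℝ) (s : ℝ) : ℝ :=
  (M.quadB b / s) *
      (-(2 * (b ⬝ᵥ (M.Cmat *ᵥ b)) / ((n : ℝ) * s ^ 3 * (1 + M.deltaF b s) ^ 2))
        + 2 * (b ⬝ᵥ (M.Cmat *ᵥ b)) ^ 2 / ((n : ℝ) ^ 2 * s ^ 4 * (1 + M.deltaF b s) ^ 3))
    - 2 * M.quadB b * (b ⬝ᵥ (M.Cmat *ᵥ b)) / ((n : ℝ) * s ^ 4 * (1 + M.deltaF b s) ^ 2)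
    + 2 * M.lamF b s * M.quadB b / s ^ 3

/-- the second-order bias term
`B₁(η) = ½ tr[(∂²R₃/∂β∂βᵀ)(η)·σ²(X(ω)ᵀΣ⁻¹X(ω))⁻¹] + ((σ²)²/(n−p_ω))·(∂²R₃/(∂σ²)²)(η)`. -/
def B1 (b : Fin pw → ℝ) (s : ℝ) : ℝ :=
  (1 / 2) * (M.hessBeta b s * (s • (M.Xwᵀ * M.Sig⁻¹ * M.Xw)⁻¹)).trace
    + (s ^ 2 / ((n : ℝ) - pw)) * M.hessSig b s

/-- `λ̂ = ((n−p_j)/(n−p_ω))·(σ̂_ω²/σ̂_j²)`. -/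
def lamHat (y : Fin n → ℝ) : ℝ :=
  (((n : ℝ) - pj) / ((n : ℝ) - pw)) * (M.sigHatw2 y / M.sigHat2 y)

/-- `λ̂²` (the estimator of `λ²`). -/
def lamHat2 (y : Fin n → ℝ) : ℝ :=
  (((n : ℝ) - pj) * ((n : ℝ) - pj + 2) / (((n : ℝ) - pw) * ((n : ℝ) - pw + 2)))
    * (M.sigHatw2 y / M.sigHat2 y) ^ 2

/-- `λ̂³` (the estimator of `λ³`). -/
def lamHat3 (y : Fin n → ℝ) : ℝ :=
  (((n : ℝ) - pj) * ((n : ℝ) - pj + 2) * ((n : ℝ) - pj + 4)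
      / (((n : ℝ) - pw) * ((n : ℝ) - pw + 2) * ((n : ℝ) - pw + 4)))
    * (M.sigHatw2 y / M.sigHat2 y) ^ 3

/-- `R̂₁ = γ{λ̂ − (−2λ̂³ + (p_j+2)λ̂² − p_jλ̂)/n − 1}`. -/
def R1Hat (y : Fin n → ℝ) : ℝ :=
  M.gam * (M.lamHat y
    - (-2 * M.lamHat3 y + ((pj : ℝ) + 2) * M.lamHat2 y - (pj : ℝ) * M.lamHat y) / n - 1)

/-- `R̂₂ = γ(−2λ̂³ + (p_j+4)λ̂² − (p_j+2))/n`. -/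
def R2Hat (y : Fin n → ℝ) : ℝ :=
  M.gam * (-2 * M.lamHat3 y + ((pj : ℝ) + 4) * M.lamHat2 y - ((pj : ℝ) + 2)) / n

/-- the bias-corrected plug-in estimator `R̃̃₃ = R₃(η̃) − B₁(η̃)`. -/
def R3TT (y : Fin n → ℝ) : ℝ :=
  M.R3F (M.betaTilde y) (M.sigTilde2 y) - M.B1 (M.betaTilde y) (M.sigTilde2 y)

/-- the plug-in estimator `R̃₄ = R₄(η̃)`. -/
def R4T (y : Fin n → ℝ) : ℝ := M.R4F (M.betaTilde y) (M.sigTilde2 y)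

/-- the proposed criterion `cAÎ`. -/
def cAIhat (y : Fin n → ℝ) : ℝ :=
  (M.m : ℝ) * Real.log (2 * π * M.sigHat2 y) + Real.log M.Rt.det
    + M.Rstar + M.R1Hat y + M.R2Hat y + M.R3TT y + M.R4T y

/-- the covariance matrix `ZGZᵀ + I_n` of the parametric bootstrap sample. -/
def SigBoot : Matrix (Fin n) (Fin n) ℝ := M.Z * M.Gm * M.Zᵀ + 1

/-- bootstrap expectation: `E_{η̃}[h(η̃†)]` where `η̃†` are the full-model GLS estimators
computed from `y† ~ N_n(X(ω)β̃, σ̃²(ZGZᵀ + I_n))`. -/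
def Eboot (y : Fin n → ℝ) (h : (Fin pw → ℝ) → ℝ → ℝ) : ℝ :=
  ∫ yd : Fin n → ℝ, h (M.betaTilde yd) (M.sigTilde2 yd) *
    gaussDensity (M.Xw *ᵥ M.betaTilde y) (M.sigTilde2 y) M.SigBoot yd

/-- the bootstrap bias-corrected estimator
`R̂₃ = 2R₃(η̃) − E_{η̃}[R₃(η̃†)] + E_{η̃}[B₁(η̃†)] − B₁(η̃)`. -/
def R3Hat (y : Fin n → ℝ) : ℝ :=
  2 * M.R3F (M.betaTilde y) (M.sigTilde2 y) - M.Eboot y M.R3F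
    + M.Eboot y M.B1 - M.B1 (M.betaTilde y) (M.sigTilde2 y)

/-- the bootstrap bias-corrected estimator `R̂₄ = 2R₄(η̃) − E_{η̃}[R₄(η̃†)]`. -/
def R4Hat (y : Fin n → ℝ) : ℝ :=
  2 * M.R4F (M.betaTilde y) (M.sigTilde2 y) - M.Eboot y M.R4F

/-- the proposed criterion `cAÎ†`. -/
def cAIhatDag (y : Fin n → ℝ) : ℝ :=
  (M.m : ℝ) * Real.log (2 * π * M.sigHat2 y) + Real.log M.Rt.det
    + M.Rstar + M.R1Hat y + M.R2Hat y + M.R3Hat y + M.R4Hat y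

end CSModel

/-- the Beta distribution `Be(a,b)` on `ℝ`, as a measure with the usual density. -/
noncomputable def betaMeasure (a b : ℝ) : MeasureTheory.Measure ℝ :=
  MeasureTheory.volume.withDensity fun x => ENNReal.ofReal
    (if x ∈ Set.Ioo (0 : ℝ) 1 then
        (Real.Gamma (a + b) / (Real.Gamma a * Real.Gamma b)) * x ^ (a - 1) * (1 - x) ^ (b - 1)
      else 0)

/-- the marginal distribution `N_n(X(ω)β*, σ*²Σ)` of `y`, as a measure on `ℝⁿ`. -/
noncomputable def CSModel.gaussMeasure {pw pj n : ℕ} (M : CSModel pw pj n) :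
    MeasureTheory.Measure (Fin n → ℝ) :=
  MeasureTheory.volume.withDensity fun y =>
    ENNReal.ofReal (CSModel.gaussDensity (M.Xw *ᵥ M.beta) M.sig2 M.Sig y)

/-! ### Gamma and beta distributions -/

lemma lintegral_eq_mul_lintegral_comp_mul {s : ℝ} (hs : 0 < s) (g : ℝ → ENNReal) :
    ∫⁻ u, g u = ENNReal.ofReal s * ∫⁻ t, g (s * t) := by
  conv_lhs => rw [← Real.smul_map_volume_mul_left hs.ne']
  rw [lintegral_smul_measure, abs_of_pos hs, smul_eq_mul]
  congr 1
  exact (Homeomorph.mulLeft₀ s hs.ne').measurableEmbedding.lintegral_map _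

/-- The pointwise identity behind the beta-gamma relation: under `u = s t`, `v = s (1 - t)`, with
Jacobian `s`, the product of two gamma densities of equal rate splits into a beta density in `t`
times a gamma density in `s`. The points `t = 0` and `t = 1` are excluded because there the
conventions for the densities on the boundary of their supports need not match. -/
lemma gammaPDF_mul_gammaPDF {a b r s t : ℝ} (ha : 0 < a) (hb : 0 < b) (hr : 0 < r) (hs : 0 < s)
    (ht0 : t ≠ 0) (ht1 : t ≠ 1) :
    ENNReal.ofReal s * (ProbabilityTheory.gammaPDF a r (s * t) *
        ProbabilityTheory.gammaPDF b r (s - s * t)) =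
      ProbabilityTheory.betaPDF a b t * ProbabilityTheory.gammaPDF (a + b) r s := by
  rcases lt_or_gt_of_ne ht0 with h | h
  · rw [ProbabilityTheory.gammaPDF_of_neg (mul_neg_of_pos_of_neg hs h),
      ProbabilityTheory.betaPDF_eq_zero_of_nonpos h.le]
    simp
  rcases lt_or_gt_of_ne ht1 with h1 | h1
  swap
  · rw [ProbabilityTheory.gammaPDF_of_neg (x := s - s * t) (by nlinarith),
      ProbabilityTheory.betaPDF_eq_zero_of_one_le h1.le]
    simp
  have e : s - s * t = s * (1 - t) := by ring
  have h1' : 0 < 1 - t := by linarith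
  rw [e, ProbabilityTheory.gammaPDF_of_nonneg (by positivity),
    ProbabilityTheory.gammaPDF_of_nonneg (by positivity),
    ProbabilityTheory.gammaPDF_of_nonneg hs.le,
    ProbabilityTheory.betaPDF_of_pos_lt_one h h1]
  have hGa := Real.Gamma_pos_of_pos ha
  have hGb := Real.Gamma_pos_of_pos hb
  have hGab := Real.Gamma_pos_of_pos (add_pos ha hb)
  rw [← ENNReal.ofReal_mul (by positivity), ← ENNReal.ofReal_mul (by positivity),
    ← ENNReal.ofReal_mul (by have := ProbabilityTheory.beta_pos ha hb; positivity)]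
  congr 1
  unfold ProbabilityTheory.beta
  have e1 : s ^ (a + b - 1) = s * s ^ (a - 1) * s ^ (b - 1) := by
    rw [show a + b - 1 = 1 + (a - 1) + (b - 1) by ring, rpow_add hs, rpow_add hs, rpow_one]
  have e2 : rexp (-(r * s)) = rexp (-(r * (s * t))) * rexp (-(r * (s * (1 - t)))) := by
    rw [← Real.exp_add]; ring_nf
  rw [mul_rpow hs.le h.le, mul_rpow hs.le h1'.le, e1, e2, rpow_add hr]
  field_simp

lemma gammaPDF_mul_gammaPDF_of_neg {a b r s u : ℝ} (hs : s < 0) :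
    ProbabilityTheory.gammaPDF a r u * ProbabilityTheory.gammaPDF b r (s - u) = 0 := by
  rcases lt_or_ge u 0 with h | h
  · rw [ProbabilityTheory.gammaPDF_of_neg h, zero_mul]
  · rw [ProbabilityTheory.gammaPDF_of_neg (x := s - u) (by linarith), mul_zero]

lemma measurable_gammaPDF (a r : ℝ) : Measurable (ProbabilityTheory.gammaPDF a r) :=
  (ProbabilityTheory.measurable_gammaPDFReal a r).ennreal_ofReal

lemma measurable_betaPDF (a b : ℝ) : Measurable (ProbabilityTheory.betaPDF a b) :=
  (ProbabilityTheory.measurable_betaPDFReal a b).ennreal_ofReal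

/-- If `u` and `v` are independent gamma variables of equal rate, then `u / (u + v)` and `u + v` are
independent, beta and gamma distributed respectively. -/
lemma map_ratio_sum_gamma {a b r : ℝ} (ha : 0 < a) (hb : 0 < b) (hr : 0 < r) :
    ((ProbabilityTheory.gammaMeasure a r).prod (ProbabilityTheory.gammaMeasure b r)).map
        (fun p : ℝ × ℝ => (p.1 / (p.1 + p.2), p.1 + p.2)) =
      (ProbabilityTheory.betaMeasure a b).prod (ProbabilityTheory.gammaMeasure (a + b) r) := by
  have hma := measurable_gammaPDF a r
  have hmb := measurable_gammaPDF b r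
  have hmab := measurable_gammaPDF (a + b) r
  have hmβ := measurable_betaPDF a b
  refine Measure.ext_of_lintegral _ fun F hF => ?_
  rw [lintegral_map hF (by fun_prop)]
  unfold ProbabilityTheory.gammaMeasure ProbabilityTheory.betaMeasure
  rw [prod_withDensity hma hmb, prod_withDensity hmβ hmab,
    lintegral_withDensity_eq_lintegral_mul _ (by fun_prop) (by fun_prop),
    lintegral_withDensity_eq_lintegral_mul _ (by fun_prop) (by fun_prop),
    lintegral_prod _ (by fun_prop), lintegral_prod_symm _ (by fun_prop)]
  simp only [Pi.mul_apply]
  calc ∫⁻ u, ∫⁻ v, ProbabilityTheory.gammaPDF a r u * ProbabilityTheory.gammaPDF b r v *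
          F (u / (u + v), u + v)
      = ∫⁻ u, ∫⁻ s, ProbabilityTheory.gammaPDF a r u * ProbabilityTheory.gammaPDF b r (s - u) *
          F (u / s, s) := by
        refine lintegral_congr fun u => ?_
        rw [← lintegral_sub_right_eq_self _ u]
        refine lintegral_congr fun s => ?_
        rw [show u + (s - u) = s by ring]
    _ = ∫⁻ s, ∫⁻ u, ProbabilityTheory.gammaPDF a r u * ProbabilityTheory.gammaPDF b r (s - u) *
          F (u / s, s) := lintegral_lintegral_swap (by fun_prop)
    _ = _ := by
        have h0 : ∀ᵐ s : ℝ, s ≠ 0 := by simp [ae_iff]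
        have h1 : ∀ᵐ s : ℝ, s ≠ 1 := by simp [ae_iff]
        refine lintegral_congr_ae ?_
        filter_upwards [h0] with s hs0
        rcases lt_or_gt_of_ne hs0 with hs | hs
        · simp_rw [gammaPDF_mul_gammaPDF_of_neg hs, ProbabilityTheory.gammaPDF_of_neg hs]
          simp
        · rw [lintegral_eq_mul_lintegral_comp_mul hs, ← lintegral_const_mul _ (by fun_prop)]
          refine lintegral_congr_ae ?_
          filter_upwards [h0, h1] with t ht0 ht1
          rw [← mul_assoc, gammaPDF_mul_gammaPDF ha hb hr hs ht0 ht1, mul_div_cancel_left₀ _ hs0]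

/-- The square of a standard normal is chi-squared with one degree of freedom. -/
lemma map_sq_gaussianReal :
    (ProbabilityTheory.gaussianReal 0 1).map (fun z => z ^ 2) =
      ProbabilityTheory.gammaMeasure (1 / 2) (1 / 2) := by
  refine Measure.ext_of_lintegral _ fun F hF => ?_
  have hmg := measurable_gammaPDF (1 / 2) (1 / 2)
  rw [lintegral_map hF (by fun_prop), ProbabilityTheory.gaussianReal_of_var_ne_zero _ one_ne_zero,
    ProbabilityTheory.gammaMeasure,
    lintegral_withDensity_eq_lintegral_mul _ (by fun_prop) (by fun_prop),
    lintegral_withDensity_eq_lintegral_mul _ (by fun_prop) (by fun_prop)]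
  -- Each of the half-lines `z > 0` and `z < 0` contributes half of the gamma integral.
  have h1 : ∀ (S : Set ℝ), MeasurableSet S → Set.InjOn (fun z : ℝ => z ^ 2) S →
      (fun z : ℝ => z ^ 2) '' S = Set.Ioi 0 → (0 : ℝ) ∉ S →
      ∫⁻ z in S, (ProbabilityTheory.gaussianPDF 0 1 * fun z => F (z ^ 2)) z =
        2⁻¹ * ∫⁻ x in Set.Ioi 0, (ProbabilityTheory.gammaPDF (1 / 2) (1 / 2) * F) x := by
    intro S hS hinj him h0
    rw [← him, lintegral_image_eq_lintegral_abs_deriv_mul hS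
      (fun x _ => ((hasDerivAt_pow 2 x).hasDerivWithinAt)) hinj,
      ← lintegral_const_mul _ (by fun_prop)]
    refine setLIntegral_congr_fun hS fun z hz => ?_
    have hz0 : z ≠ 0 := fun h => h0 (h ▸ hz)
    have hza : 0 < |z| := abs_pos.mpr hz0
    simp only [Pi.mul_apply]
    rw [← mul_assoc, ← mul_assoc]
    congr 1
    rw [ProbabilityTheory.gammaPDF_of_nonneg (by positivity), ProbabilityTheory.gaussianPDF,
      ProbabilityTheory.gaussianPDFReal,
      show (2⁻¹ : ENNReal) = ENNReal.ofReal 2⁻¹ by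
        rw [ENNReal.ofReal_inv_of_pos two_pos]; simp,
      ← ENNReal.ofReal_mul (by positivity), ← ENNReal.ofReal_mul (by positivity)]
    congr 1
    rw [Real.Gamma_one_half_eq, ← sqrt_eq_rpow, show (1 / 2 - 1 : ℝ) = -(1 / 2) by norm_num,
      rpow_neg (by positivity), ← sqrt_eq_rpow, sqrt_sq_eq_abs,
      show (1 / 2 : ℝ) = 2⁻¹ by norm_num, sqrt_inv]
    simp only [NNReal.coe_one, mul_one, sub_zero, Nat.cast_ofNat, Nat.add_one_sub_one, pow_one,
      abs_mul, abs_two]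
    rw [sqrt_mul zero_le_two, show -z ^ 2 / 2 = -(2⁻¹ * z ^ 2) by ring]
    field_simp
  rw [← lintegral_add_compl _ (measurableSet_Ioi (a := (0 : ℝ))), Set.compl_Ioi,
    ← setLIntegral_congr Iio_ae_eq_Iic, h1 _ measurableSet_Ioi ?_ ?_ (by simp),
    h1 _ measurableSet_Iio ?_ ?_ (by simp), ← add_mul, ENNReal.inv_two_add_inv_two, one_mul]
  · conv_rhs => rw [← lintegral_add_compl _ (measurableSet_Ioi (a := (0 : ℝ)))]
    rw [Set.compl_Ioi, ← setLIntegral_congr Iio_ae_eq_Iic,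
      setLIntegral_eq_zero measurableSet_Iio, add_zero]
    intro x hx
    simp [ProbabilityTheory.gammaPDF_of_neg (Set.mem_Iio.mp hx)]
  · intro x hx y hy h
    have hx' : x < 0 := hx
    have hy' : y < 0 := hy
    simp only at h
    nlinarith
  · ext x
    simp only [Set.mem_image, Set.mem_Iio, Set.mem_Ioi]
    constructor
    · rintro ⟨y, hy, rfl⟩; nlinarith
    · intro hx; exact ⟨-√x, by simpa using hx, by simp [sq_sqrt hx.le]⟩
  · intro x hx y hy h
    have hx' : 0 < x := hx
    have hy' : 0 < y := hy
    simp only at h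
    nlinarith
  · ext x
    simp only [Set.mem_image, Set.mem_Ioi]
    constructor
    · rintro ⟨y, hy, rfl⟩; positivity
    · intro hx; exact ⟨√x, by simpa using hx, by simp [sq_sqrt hx.le]⟩

/-! ### Sums of squares of independent standard normals -/

lemma map_ratio_of_indepFun {Ω : Type*} [MeasurableSpace Ω] {P : Measure Ω}
    [IsProbabilityMeasure P] {U V : Ω → ℝ} (hU : Measurable U) (hV : Measurable V)
    (hind : ProbabilityTheory.IndepFun U V P) {a b r : ℝ} (ha : 0 < a) (hb : 0 < b) (hr : 0 < r)
    (hUlaw : P.map U = ProbabilityTheory.gammaMeasure a r)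
    (hVlaw : P.map V = ProbabilityTheory.gammaMeasure b r) :
    P.map (fun x => U x / (U x + V x)) = ProbabilityTheory.betaMeasure a b ∧
      P.map (fun x => U x + V x) = ProbabilityTheory.gammaMeasure (a + b) r := by
  have := ProbabilityTheory.isProbabilityMeasureBeta ha hb
  have := ProbabilityTheory.isProbabilityMeasure_gammaMeasure (add_pos ha hb) hr
  have key : P.map (fun x => (U x / (U x + V x), U x + V x)) =
      (ProbabilityTheory.betaMeasure a b).prod (ProbabilityTheory.gammaMeasure (a + b) r) := by
    rw [← map_ratio_sum_gamma ha hb hr, ← hUlaw, ← hVlaw,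
      ← (ProbabilityTheory.indepFun_iff_map_prod_eq_prod_map_map hU.aemeasurable
        hV.aemeasurable).mp hind, Measure.map_map (by fun_prop) (by fun_prop)]
    rfl
  constructor
  · have h := congrArg (Measure.map Prod.fst) key
    rw [Measure.map_map (by fun_prop) (by fun_prop), Measure.map_fst_prod, measure_univ,
      one_smul] at h
    exact h
  · have h := congrArg (Measure.map Prod.snd) key
    rw [Measure.map_map (by fun_prop) (by fun_prop), Measure.map_snd_prod, measure_univ,
      one_smul] at h
    exact h

lemma iIndepFun_sq (ι : Type*) [Fintype ι] :
    ProbabilityTheory.iIndepFun (fun (i : ι) (z : ι → ℝ) => z i ^ 2)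
      (Measure.pi fun _ : ι => ProbabilityTheory.gaussianReal 0 1) :=
  ProbabilityTheory.iIndepFun_pi (μ := fun _ : ι => ProbabilityTheory.gaussianReal 0 1)
    (X := fun _ x => x ^ 2) (by fun_prop)

/-- A sum of `#T` squared independent standard normals is chi-squared with `#T` degrees of
freedom, written here as the gamma law of shape `#T / 2` and rate `1 / 2`. -/
lemma map_sum_sq_pi_gaussianReal {ι : Type*} [Fintype ι] {T : Finset ι} (hT : T.Nonempty) :
    (Measure.pi fun _ : ι => ProbabilityTheory.gaussianReal 0 1).map
        (fun z => ∑ i ∈ T, z i ^ 2) =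
      ProbabilityTheory.gammaMeasure ((T.card : ℝ) / 2) (1 / 2) := by
  have h1 : ∀ i : ι, (Measure.pi fun _ : ι => ProbabilityTheory.gaussianReal 0 1).map
      (fun z => z i ^ 2) = ProbabilityTheory.gammaMeasure (1 / 2) (1 / 2) := by
    intro i
    have h := (measurePreserving_eval (fun _ : ι => ProbabilityTheory.gaussianReal 0 1) i).map_eq
    rw [← map_sq_gaussianReal]
    conv_rhs => rw [← h]
    rw [Measure.map_map (by fun_prop) (by fun_prop)]
    rfl
  induction hT using Finset.Nonempty.cons_induction with
  | singleton i => simpa using h1 i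
  | cons i T hi hT ih =>
    have hind := (iIndepFun_sq ι).indepFun_finsetSum_of_notMem (by fun_prop) hi
    have hc : 0 < (T.card : ℝ) := by exact_mod_cast hT.card_pos
    have := (map_ratio_of_indepFun (by fun_prop) (by fun_prop) hind (a := (T.card : ℝ) / 2)
      (b := 1 / 2) (by positivity) (by norm_num) (r := 1 / 2) (by norm_num)
      (by convert ih using 2; ext; simp) (h1 i)).2
    simp only [Finset.card_cons, Finset.sum_cons]
    rw [show ((T.card + 1 : ℕ) : ℝ) / 2 = (T.card : ℝ) / 2 + 1 / 2 by push_cast; ring, ← this]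
    congr 1
    ext z
    simp [add_comm]

lemma map_ratio_pi_gaussianReal {ι : Type*} [Fintype ι] {S T : Finset ι} (hS : S.Nonempty)
    (hT : T.Nonempty) (hST : Disjoint S T) :
    (Measure.pi fun _ : ι => ProbabilityTheory.gaussianReal 0 1).map
        (fun z => (∑ i ∈ S, z i ^ 2) / (∑ i ∈ S, z i ^ 2 + ∑ i ∈ T, z i ^ 2)) =
      ProbabilityTheory.betaMeasure ((S.card : ℝ) / 2) ((T.card : ℝ) / 2) := by
  have hcS : 0 < (S.card : ℝ) := by exact_mod_cast hS.card_pos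
  have hcT : 0 < (T.card : ℝ) := by exact_mod_cast hT.card_pos
  have hind := (iIndepFun_sq ι).indepFun_finset S T hST (by fun_prop)
  have hind2 := hind.comp (φ := fun w => ∑ i, w i) (ψ := fun w => ∑ i, w i)
    (by fun_prop) (by fun_prop)
  have e : ∀ T : Finset ι, ((fun w : T → ℝ => ∑ i, w i) ∘ fun (a : ι → ℝ) (i : T) => a i ^ 2) =
      fun z => ∑ i ∈ T, z i ^ 2 := by
    intro T
    ext z
    simp only [Function.comp]
    exact Finset.sum_coe_sort T (fun i => z i ^ 2)
  rw [e, e] at hind2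
  exact (map_ratio_of_indepFun (by fun_prop) (by fun_prop) hind2 (by positivity) (by positivity)
    (r := 1 / 2) (by norm_num) (map_sum_sq_pi_gaussianReal hS) (map_sum_sq_pi_gaussianReal hT)).1

/-! ### Whitening a multivariate normal density -/

lemma pi_gaussianReal_eq_withDensity (ι : Type*) [Fintype ι] :
    (Measure.pi fun _ : ι => ProbabilityTheory.gaussianReal 0 1) =
      volume.withDensity fun z =>
        ENNReal.ofReal (∏ i, ProbabilityTheory.gaussianPDFReal 0 1 (z i)) := by
  refine Measure.pi_eq fun s hs => ?_
  rw [withDensity_apply _ (MeasurableSet.univ_pi hs)]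
  have hint : Integrable (ProbabilityTheory.gaussianPDFReal 0 1) :=
    ProbabilityTheory.integrable_gaussianPDFReal 0 1
  have hnn := ProbabilityTheory.gaussianPDFReal_nonneg 0 1
  rw [volume_pi, Measure.restrict_pi_pi, ← ofReal_integral_eq_lintegral_ofReal,
    integral_fintype_prod_eq_prod (fun _ : ι => ProbabilityTheory.gaussianPDFReal 0 1),
    ENNReal.ofReal_prod_of_nonneg]
  · refine Finset.prod_congr rfl fun i _ => ?_
    rw [ProbabilityTheory.gaussianReal_apply_eq_integral _ one_ne_zero]
  · exact fun i _ => integral_nonneg hnn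
  · exact Integrable.fintype_prod (fun i => hint.restrict)
  · exact ae_of_all _ fun z => Finset.prod_nonneg fun i _ => hnn _

lemma prod_gaussianPDFReal {ι : Type*} [Fintype ι] (z : ι → ℝ) :
    ∏ i, ProbabilityTheory.gaussianPDFReal 0 1 (z i) =
      (√(2 * π))⁻¹ ^ Fintype.card ι * rexp (-(z ⬝ᵥ z) / 2) := by
  simp only [ProbabilityTheory.gaussianPDFReal, Finset.prod_mul_distrib, ← Real.exp_sum]
  simp [dotProduct, ← Finset.sum_div, Finset.sum_neg_distrib, pow_two]

/-- The density of `N(mu, s S)` at `y` is the Jacobian of the whitening map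
`y ↦ s^(-1/2) L (y - mu)` times the standard normal density at the image of `y`, when
`S⁻¹ = Lᵀ L`. -/
lemma gaussDensity_eq_whitened {n : ℕ} (mu : Fin n → ℝ) {s : ℝ} (hs : 0 < s)
    {S L : Matrix (Fin n) (Fin n) ℝ} (hSL : S⁻¹ = Lᵀ * L) (hL : L.det ≠ 0) (y : Fin n → ℝ) :
    CSModel.gaussDensity mu s S y = |((√s)⁻¹ • L).det| *
      ∏ i, ProbabilityTheory.gaussianPDFReal 0 1 ((((√s)⁻¹ • L) *ᵥ (y - mu)) i) := by
  have hss : √s * √s = s := mul_self_sqrt hs.le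
  have hs0 : 0 < √s := sqrt_pos.mpr hs
  have hdet : S.det = (L.det ^ 2)⁻¹ := by
    have h := congrArg Matrix.det hSL
    rw [Matrix.det_nonsing_inv, Ring.inverse_eq_inv', Matrix.det_mul, Matrix.det_transpose] at h
    rw [← inv_inv S.det, h, sq]
  have hq : (((√s)⁻¹ • L) *ᵥ (y - mu)) ⬝ᵥ (((√s)⁻¹ • L) *ᵥ (y - mu)) =
      ((y - mu) ⬝ᵥ (S⁻¹ *ᵥ (y - mu))) / s := by
    rw [hSL, Matrix.smul_mulVec, smul_dotProduct, dotProduct_smul, ← Matrix.mulVec_mulVec,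
      Matrix.dotProduct_mulVec (y - mu) Lᵀ, Matrix.vecMul_transpose, smul_eq_mul, smul_eq_mul,
      ← mul_assoc, ← mul_inv, hss, div_eq_inv_mul]
  have hpow : √((2 * π * s) ^ n) = (√(2 * π) * √s) ^ n := by
    rw [sqrt_eq_iff_eq_sq (by positivity) (by positivity), ← pow_mul, mul_comm n 2, pow_mul,
      mul_pow √(2 * π), sq_sqrt (by positivity), sq_sqrt hs.le]
  rw [prod_gaussianPDFReal, hq, CSModel.gaussDensity, hdet, Matrix.det_smul, Fintype.card_fin,
    sqrt_mul (by positivity), sqrt_inv, sqrt_sq_eq_abs, abs_mul, abs_pow,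
    abs_of_pos (inv_pos.mpr hs0), hpow]
  have hL' : 0 < |L.det| := abs_pos.mpr hL
  rw [neg_div, neg_div, div_div, mul_comm s 2, mul_pow, inv_pow, inv_pow]
  field_simp

/-- The whitening map sends `N(mu, s S)` to the standard normal law. -/
lemma map_whiten_gaussDensity {n : ℕ} (mu : Fin n → ℝ) {s : ℝ} (hs : 0 < s)
    {S L : Matrix (Fin n) (Fin n) ℝ} (hSL : S⁻¹ = Lᵀ * L) (hL : L.det ≠ 0) :
    (volume.withDensity fun y => ENNReal.ofReal (CSModel.gaussDensity mu s S y)).map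
        (fun y => ((√s)⁻¹ • L) *ᵥ (y - mu)) =
      Measure.pi fun _ : Fin n => ProbabilityTheory.gaussianReal 0 1 := by
  have hs0 : 0 < √s := sqrt_pos.mpr hs
  set K := (√s)⁻¹ • L with hK
  have hKdet : K.det ≠ 0 := by
    rw [hK, Matrix.det_smul]
    positivity
  have hKm : Measurable fun y : Fin n → ℝ => K *ᵥ y :=
    (Continuous.matrix_mulVec continuous_const continuous_id).measurable
  have hpdf : Measurable (ProbabilityTheory.gaussianPDFReal 0 1) :=
    ProbabilityTheory.measurable_gaussianPDFReal 0 1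
  have hmap : (volume : Measure (Fin n → ℝ)) = ENNReal.ofReal |K.det| •
      volume.map fun y : Fin n → ℝ => K *ᵥ y := by
    have h := Real.map_matrix_volume_pi_eq_smul_volume_pi hKdet
    have e : (⇑(Matrix.toLin' K)) = fun y : Fin n → ℝ => K *ᵥ y := by
      ext y; simp
    rw [e] at h
    rw [h, smul_smul, ← ENNReal.ofReal_mul (abs_nonneg _), ← abs_mul, mul_inv_cancel₀ hKdet]
    simp
  have hd : ∀ y, CSModel.gaussDensity mu s S y = |K.det| *
      ∏ i, ProbabilityTheory.gaussianPDFReal 0 1 ((K *ᵥ (y - mu)) i) :=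
    gaussDensity_eq_whitened mu hs hSL hL
  have hm1 : Measurable fun y : Fin n → ℝ => K *ᵥ (y - mu) := hKm.comp (by fun_prop)
  refine Measure.ext_of_lintegral _ fun F hF => ?_
  simp_rw [hd]
  rw [lintegral_map hF hm1, pi_gaussianReal_eq_withDensity,
    lintegral_withDensity_eq_lintegral_mul _ (by fun_prop) (by fun_prop),
    lintegral_withDensity_eq_lintegral_mul _ (by fun_prop) (by fun_prop)]
  conv_rhs => rw [hmap]
  rw [lintegral_smul_measure, lintegral_map (by fun_prop) hKm, smul_eq_mul,
    ← lintegral_const_mul _ (by fun_prop)]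
  conv_rhs => rw [← lintegral_sub_right_eq_self _ mu]
  refine lintegral_congr fun y => ?_
  simp only [Pi.mul_apply]
  rw [ENNReal.ofReal_mul (abs_nonneg _), mul_assoc]

/-! ### Orthonormal bases adapted to nested column spaces -/

/-- Here `ρ` is the component of `x` orthogonal to `V`, so its squared length is the sum of the
squared coordinates of `x` along the basis vectors orthogonal to `V`. -/
lemma norm_sq_eq_sum_of_adapted {E ι : Type*} [NormedAddCommGroup E] [InnerProductSpace ℝ E]
    [Fintype ι] (V : Submodule ℝ E) (b : OrthonormalBasis ι ℝ E) (T : Finset ι)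
    (hT : ∀ i ∈ T, b i ∈ Vᗮ) (hT' : ∀ i ∉ T, b i ∈ V) {x ρ : E} (hρ : ρ ∈ Vᗮ) (hxρ : x - ρ ∈ V) :
    ‖ρ‖ ^ 2 = ∑ i ∈ T, inner ℝ (b i) x ^ 2 := by
  rw [← b.sum_sq_inner_right ρ]
  symm
  rw [← Finset.sum_subset (Finset.subset_univ T)]
  · refine Finset.sum_congr rfl fun i hi => ?_
    have h := Submodule.inner_left_of_mem_orthogonal hxρ (hT i hi)
    rw [inner_sub_right, sub_eq_zero] at h
    rw [h]
  · intro i _ hi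
    rw [Submodule.inner_right_of_mem_orthogonal (hT' i hi) hρ]
    simp

/-- For `V₁ ≤ V₂` there is an orthonormal basis of `E` obtained by joining bases of `V₁`, of
`V₁ᗮ ⊓ V₂` (indexed by `T`) and of `V₂ᗮ` (indexed by `S`). -/
lemma exists_adapted_orthonormalBasis {E : Type*} [NormedAddCommGroup E] [InnerProductSpace ℝ E]
    [FiniteDimensional ℝ E] {V₁ V₂ : Submodule ℝ E} (hV : V₁ ≤ V₂) :
    ∃ (ι : Type) (_ : Fintype ι) (b : OrthonormalBasis ι ℝ E) (S T : Finset ι), Disjoint S T ∧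
      Module.finrank ℝ V₂ + S.card = Module.finrank ℝ E ∧
      Module.finrank ℝ V₁ + T.card = Module.finrank ℝ V₂ ∧
      (∀ i ∈ S, b i ∈ V₂ᗮ) ∧ (∀ i ∉ S, b i ∈ V₂) ∧
      (∀ i, i ∈ S ∨ i ∈ T → b i ∈ V₁ᗮ) ∧ (∀ i, ¬(i ∈ S ∨ i ∈ T) → b i ∈ V₁) := by
  classical
  let W : Fin 3 → Submodule ℝ E := ![V₁, V₁ᗮ ⊓ V₂, V₂ᗮ]
  have hW : OrthogonalFamily ℝ (fun i => W i) fun i => (W i).subtypeₗᵢ := by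
    refine OrthogonalFamily.of_pairwise ?_
    have h01 : V₁ ⟂ V₁ᗮ ⊓ V₂ := (Submodule.isOrtho_orthogonal_right V₁).mono_right inf_le_left
    have h02 : V₁ ⟂ V₂ᗮ := (Submodule.isOrtho_orthogonal_right V₂).mono_left hV
    have h12 : V₁ᗮ ⊓ V₂ ⟂ V₂ᗮ := (Submodule.isOrtho_orthogonal_right V₂).mono_left inf_le_right
    intro i j hij
    fin_cases i <;> fin_cases j <;> first | exact absurd rfl hij | skip
    exacts [h01, h02, h01.symm, h12, h02.symm, h12.symm]
  have hint : DirectSum.IsInternal W := by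
    rw [hW.isInternal_iff, Submodule.eq_bot_iff]
    intro x hx
    have hx' : ∀ k, x ∈ (W k)ᗮ := fun k => Submodule.orthogonal_le (le_iSup W k) hx
    have h0 : x ∈ V₁ᗮ := hx' 0
    have h1 : x ∈ (V₁ᗮ ⊓ V₂)ᗮ := hx' 1
    have h2 : x ∈ V₂ᗮᗮ := hx' 2
    rw [Submodule.orthogonal_orthogonal] at h2
    have h3 : x ∈ V₁ᗮ ⊓ V₂ := ⟨h0, h2⟩
    exact (inner_self_eq_zero (𝕜 := ℝ)).mp (Submodule.inner_right_of_mem_orthogonal h3 h1)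
  let b := hint.collectedOrthonormalBasis hW fun k => stdOrthonormalBasis ℝ (W k)
  have hb : ∀ a, b a ∈ W a.1 := hint.collectedOrthonormalBasis_mem hW _
  refine ⟨_, inferInstance, b, Finset.univ.map (Function.Embedding.sigmaMk 2),
    Finset.univ.map (Function.Embedding.sigmaMk 1), ?_, ?_, ?_, ?_, ?_, ?_, ?_⟩
  · rw [Finset.disjoint_left]
    intro a ha hb
    obtain ⟨u, _, rfl⟩ := Finset.mem_map.mp ha
    obtain ⟨v, _, h⟩ := Finset.mem_map.mp hb
    simpa using congrArg Sigma.fst h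
  · rw [Finset.card_map, Finset.card_univ, Fintype.card_fin]
    exact Submodule.finrank_add_finrank_orthogonal V₂
  · rw [Finset.card_map, Finset.card_univ, Fintype.card_fin]
    exact Submodule.finrank_add_inf_finrank_orthogonal hV
  · rintro ⟨k, i⟩ hi
    obtain ⟨u, _, h⟩ := Finset.mem_map.mp hi
    rw [← h]
    exact hb ⟨2, u⟩
  · rintro ⟨k, i⟩ hi
    have := hb ⟨k, i⟩
    fin_cases k
    · exact hV this
    · exact this.2
    · exact absurd (Finset.mem_map.mpr ⟨i, Finset.mem_univ _, rfl⟩) hi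
  · rintro ⟨k, i⟩ (hi | hi)
    · obtain ⟨u, _, h⟩ := Finset.mem_map.mp hi
      rw [← h]
      exact Submodule.orthogonal_le hV (hb ⟨2, u⟩)
    · obtain ⟨u, _, h⟩ := Finset.mem_map.mp hi
      rw [← h]
      exact (hb ⟨1, u⟩).1
  · rintro ⟨k, i⟩ hi
    have := hb ⟨k, i⟩
    fin_cases k
    · exact this
    · exact absurd (Or.inr (Finset.mem_map.mpr ⟨i, Finset.mem_univ _, rfl⟩)) hi
    · exact absurd (Or.inl (Finset.mem_map.mpr ⟨i, Finset.mem_univ _, rfl⟩)) hi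

/-- The column space of a matrix, as a subspace of Euclidean space. -/
def colSpace {n p : ℕ} (A : Matrix (Fin n) (Fin p) ℝ) : Submodule ℝ (EuclideanSpace ℝ (Fin n)) :=
  (LinearMap.range A.mulVecLin).map (WithLp.linearEquiv 2 ℝ (Fin n → ℝ)).symm.toLinearMap

lemma mem_colSpace {n p : ℕ} {A : Matrix (Fin n) (Fin p) ℝ} {x : EuclideanSpace ℝ (Fin n)} :
    x ∈ colSpace A ↔ ∃ c, WithLp.toLp 2 (A *ᵥ c) = x := by
  simp only [colSpace, Submodule.mem_map, LinearMap.mem_range]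
  constructor
  · rintro ⟨_, ⟨c, rfl⟩, rfl⟩
    exact ⟨c, rfl⟩
  · rintro ⟨c, rfl⟩
    exact ⟨_, ⟨c, rfl⟩, rfl⟩

lemma finrank_colSpace {n p : ℕ} (A : Matrix (Fin n) (Fin p) ℝ) :
    Module.finrank ℝ (colSpace A) = A.rank :=
  LinearEquiv.finrank_map_eq _ _

lemma mem_colSpace_orthogonal {n p : ℕ} {A : Matrix (Fin n) (Fin p) ℝ} {v : Fin n → ℝ}
    (h : Aᵀ *ᵥ v = 0) : WithLp.toLp 2 v ∈ (colSpace A)ᗮ := by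
  rw [Submodule.mem_orthogonal]
  intro u hu
  obtain ⟨c, rfl⟩ := mem_colSpace.mp hu
  rw [EuclideanSpace.inner_toLp_toLp, star_trivial, Matrix.dotProduct_mulVec,
    ← Matrix.mulVec_transpose, h, zero_dotProduct]

/-- If the mean `mu` lies in the column space of `X`, the weighted residual sum of squares of the
GLS fit on `X` is `s` times the sum of squares of those coordinates of the whitened observation that
are orthogonal to the whitened column space: after whitening, GLS is orthogonal projection, and
replacing `y` by `y - mu` does not change the residual. -/
lemma gls_residual_form {n p : ℕ} {ι : Type*} [Fintype ι] {S L : Matrix (Fin n) (Fin n) ℝ}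
    (hSL : S⁻¹ = Lᵀ * L) (hL : L.det ≠ 0) {X : Matrix (Fin n) (Fin p) ℝ} (hX : X.rank = p)
    {s : ℝ} (hs : 0 < s) {mu : Fin n → ℝ} (hmu : ∃ c, mu = X *ᵥ c)
    (b : OrthonormalBasis ι ℝ (EuclideanSpace ℝ (Fin n))) (T : Finset ι)
    (hT : ∀ i ∈ T, b i ∈ (colSpace (L * X))ᗮ) (hT' : ∀ i ∉ T, b i ∈ colSpace (L * X))
    (y : Fin n → ℝ) :
    (y - X *ᵥ (((Xᵀ * S⁻¹ * X)⁻¹ * Xᵀ * S⁻¹) *ᵥ y)) ⬝ᵥ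
        (S⁻¹ *ᵥ (y - X *ᵥ (((Xᵀ * S⁻¹ * X)⁻¹ * Xᵀ * S⁻¹) *ᵥ y))) =
      s * ∑ i ∈ T, inner ℝ (b i) (WithLp.toLp 2 (((√s)⁻¹ • L) *ᵥ (y - mu))) ^ 2 := by
  obtain ⟨c, rfl⟩ := hmu
  set d := ((Xᵀ * S⁻¹ * X)⁻¹ * Xᵀ * S⁻¹) *ᵥ y with hd
  set r := y - X *ᵥ d with hr
  have hG : IsUnit (Xᵀ * S⁻¹ * X).det := by
    have hrank : (Xᵀ * S⁻¹ * X).rank = p := by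
      have e : Xᵀ * S⁻¹ * X = (L * X)ᵀ * (L * X) := by
        rw [hSL, Matrix.transpose_mul]; simp only [Matrix.mul_assoc]
      rw [e, Matrix.rank_transpose_mul_self, Matrix.rank_mul_eq_right_of_isUnit_det _ _
        (isUnit_iff_ne_zero.mpr hL), hX]
    rw [← Matrix.isUnit_iff_isUnit_det, ← Matrix.mulVec_surjective_iff_isUnit]
    have htop : LinearMap.range (Xᵀ * S⁻¹ * X).mulVecLin = ⊤ := by
      apply Submodule.eq_top_of_finrank_eq
      rw [Module.finrank_fin_fun]
      exact hrank
    exact LinearMap.range_eq_top.mp htop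
  -- The normal equations: the whitened residual is orthogonal to the columns of `L * X`.
  have hnormal : (L * X)ᵀ *ᵥ (L *ᵥ r) = 0 := by
    rw [Matrix.mulVec_mulVec, Matrix.transpose_mul, Matrix.mul_assoc, ← hSL, hr,
      Matrix.mulVec_sub, Matrix.mulVec_mulVec, hd, Matrix.mulVec_mulVec, sub_eq_zero]
    congr 1
    rw [Matrix.mul_assoc (Xᵀ * S⁻¹ * X)⁻¹, Matrix.mul_nonsing_inv_cancel_left _ _ hG]
  have hs0 : 0 < √s := sqrt_pos.mpr hs
  have hkey := norm_sq_eq_sum_of_adapted (colSpace (L * X)) b T hT hT'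
    (x := WithLp.toLp 2 (((√s)⁻¹ • L) *ᵥ (y - X *ᵥ c)))
    (ρ := WithLp.toLp 2 (((√s)⁻¹ • L) *ᵥ r)) (by
      apply mem_colSpace_orthogonal
      rw [Matrix.smul_mulVec, Matrix.mulVec_smul, hnormal, smul_zero]) (by
      rw [mem_colSpace]
      refine ⟨(√s)⁻¹ • (d - c), ?_⟩
      rw [← WithLp.toLp_sub, ← Matrix.mulVec_sub, hr, ← Matrix.mulVec_mulVec]
      congr 1
      rw [Matrix.mulVec_smul, Matrix.mulVec_smul, Matrix.smul_mulVec, Matrix.mulVec_sub]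
      congr 2
      abel)
  rw [← hkey, EuclideanSpace.real_norm_sq_eq]
  have hLr : r ⬝ᵥ (S⁻¹ *ᵥ r) = ∑ i, (L *ᵥ r) i ^ 2 := by
    rw [hSL, ← Matrix.mulVec_mulVec, Matrix.dotProduct_mulVec, Matrix.vecMul_transpose]
    simp [dotProduct, sq]
  rw [hLr, Finset.mul_sum]
  refine Finset.sum_congr rfl fun i _ => ?_
  simp only [Matrix.smul_mulVec, Pi.smul_apply, smul_eq_mul, mul_pow, inv_pow, sq_sqrt hs.le]
  field_simp

/-- Rotation invariance of the standard normal law: the coordinates in any orthonormal basis are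
again independent standard normals. -/
lemma map_orthonormalBasis_coords {n : ℕ} {ι : Type*} [Fintype ι]
    (b : OrthonormalBasis ι ℝ (EuclideanSpace ℝ (Fin n))) {F : (ι → ℝ) → ℝ} (hF : Measurable F) :
    (Measure.pi fun _ : Fin n => ProbabilityTheory.gaussianReal 0 1).map
        (fun w => F fun i => inner ℝ (b i) (WithLp.toLp 2 w)) =
      (Measure.pi fun _ : ι => ProbabilityTheory.gaussianReal 0 1).map F := by
  have h := (ProbabilityTheory.map_pi_eq_stdGaussian (ι := Fin n)).trans
    (ProbabilityTheory.stdGaussian_eq_map_pi_orthonormalBasis b)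
  have hG : Measurable fun x : EuclideanSpace ℝ (Fin n) => F fun i => inner ℝ (b i) x :=
    hF.comp (by fun_prop)
  have h2 := congrArg (Measure.map fun x : EuclideanSpace ℝ (Fin n) =>
    F fun i => inner ℝ (b i) x) h
  rw [Measure.map_map hG (by fun_prop), Measure.map_map hG (by fun_prop)] at h2
  refine Eq.trans h2 ?_
  congr 1
  ext z
  simp only [Function.comp]
  congr 1
  ext i
  classical
  simp [inner_sum, inner_smul_right, OrthonormalBasis.inner_eq_ite]

/-! ### The model -/

/-- The beta law of the statement agrees with the one in Mathlib. -/
lemma betaMeasure_eq (a b : ℝ) : betaMeasure a b = ProbabilityTheory.betaMeasure a b := by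
  rw [betaMeasure, ProbabilityTheory.betaMeasure]
  congr 1
  ext x
  rw [ProbabilityTheory.betaPDF, ProbabilityTheory.betaPDFReal]
  simp only [Set.mem_Ioo, ProbabilityTheory.beta, one_div_div]

lemma CSModel.posDef_Sig {pw pj n : ℕ} (M : CSModel pw pj n) : M.Sig.PosDef := by
  have h := M.hG.posSemidef.mul_mul_conjTranspose_same M.Z
  rw [Matrix.conjTranspose_eq_transpose_of_trivial] at h
  exact Matrix.PosDef.posSemidef_add h M.hR

open scoped MatrixOrder in
lemma Matrix.PosDef.exists_inv_eq_transpose_mul {n : ℕ} {S : Matrix (Fin n) (Fin n) ℝ}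
    (hS : S.PosDef) : ∃ L : Matrix (Fin n) (Fin n) ℝ, S⁻¹ = Lᵀ * L ∧ L.det ≠ 0 := by
  obtain ⟨L, hL⟩ := CStarAlgebra.nonneg_iff_eq_star_mul_self.mp
    (Matrix.nonneg_iff_posSemidef.mpr hS.inv.posSemidef)
  rw [Matrix.star_eq_conjTranspose, Matrix.conjTranspose_eq_transpose_of_trivial] at hL
  refine ⟨L, hL, fun h0 => hS.inv.det_pos.ne' ?_⟩
  rw [hL, Matrix.det_mul, h0, mul_zero]

lemma CSModel.colSpace_mul_Xj_le {pw pj n : ℕ} (M : CSModel pw pj n)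
    (L : Matrix (Fin n) (Fin n) ℝ) : colSpace (L * M.Xj) ≤ colSpace (L * M.Xw) := by
  intro x hx
  obtain ⟨c, rfl⟩ := mem_colSpace.mp hx
  have h : M.Xj = M.Xw * (1 : Matrix (Fin pw) (Fin pw) ℝ).submatrix id M.emb := by
    ext i k
    simp [CSModel.Xj, Matrix.mul_apply, Matrix.one_apply]
  refine mem_colSpace.mpr ⟨(1 : Matrix (Fin pw) (Fin pw) ℝ).submatrix id M.emb *ᵥ c, ?_⟩
  rw [h, Matrix.mulVec_mulVec, Matrix.mul_assoc]

open CSModel in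
theorem stmt15 {pw pj n : ℕ} (M : CSModel pw pj n)
    (hover : M.Overspec) (hpj : pj < pw) (hpw : pw < n) :
    MeasureTheory.Measure.map (fun y => M.sigHatw2 y / M.sigHat2 y) M.gaussMeasure
      = betaMeasure (((n : ℝ) - pw) / 2) (((pw : ℝ) - pj) / 2) := by
  obtain ⟨c, hc⟩ := hover
  obtain ⟨L, hSL, hL⟩ := M.posDef_Sig.exists_inv_eq_transpose_mul
  have hLu : IsUnit L.det := isUnit_iff_ne_zero.mpr hL
  have hXj : M.Xj.rank = pj := M.hrankj
  obtain ⟨ι, _, b, S, T, hST, hS, hT, hb1, hb2, hb3, hb4⟩ :=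
    exists_adapted_orthonormalBasis (M.colSpace_mul_Xj_le L)
  rw [finrank_colSpace, Matrix.rank_mul_eq_right_of_isUnit_det _ _ hLu, M.hrankw,
    finrank_euclideanSpace_fin] at hS
  rw [finrank_colSpace, finrank_colSpace, Matrix.rank_mul_eq_right_of_isUnit_det _ _ hLu,
    Matrix.rank_mul_eq_right_of_isUnit_det _ _ hLu, M.hrankw, hXj] at hT
  have hSne : S.Nonempty := Finset.card_pos.mp (by omega)
  have hTne : T.Nonempty := Finset.card_pos.mp (by omega)
  have hScard : (S.card : ℝ) = n - pw := by rw [← hS]; push_cast; ring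
  have hTcard : (T.card : ℝ) = pw - pj := by rw [← hT]; push_cast; ring
  have hn : (n : ℝ) ≠ 0 := by
    have : n ≠ 0 := by omega
    exact_mod_cast this
  classical
  set F : (ι → ℝ) → ℝ := fun z =>
    (∑ i ∈ S, z i ^ 2) / (∑ i ∈ S, z i ^ 2 + ∑ i ∈ T, z i ^ 2) with hF
  have hFm : Measurable F := by fun_prop
  -- The factors `n` and `σ*²` cancel, so the ratio depends only on the whitened coordinates.
  have hratio : (fun y => M.sigHatw2 y / M.sigHat2 y) =
      (fun w => F fun i => inner ℝ (b i) (WithLp.toLp 2 w)) ∘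
        fun y => ((√M.sig2)⁻¹ • L) *ᵥ (y - M.Xw *ᵥ M.beta) := by
    ext y
    have h1 := gls_residual_form hSL hL M.hrankw M.hsig (mu := M.Xw *ᵥ M.beta)
      ⟨M.beta, rfl⟩ b S hb1 hb2 y
    have h2 := gls_residual_form hSL hL hXj M.hsig (mu := M.Xw *ᵥ M.beta)
      ⟨c, hc⟩ b (S ∪ T) (fun i hi => hb3 i (Finset.mem_union.mp hi))
      (fun i hi => hb4 i fun h => hi (Finset.mem_union.mpr h)) y
    rw [Finset.sum_union hST] at h2
    have h1' : M.sigHatw2 y = _ := congrArg (· / (n : ℝ)) h1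
    have h2' : M.sigHat2 y = _ := congrArg (· / (n : ℝ)) h2
    rw [h1', h2']
    simp only [hF, Function.comp]
    rw [div_div_div_cancel_right₀ hn, mul_div_mul_left _ _ M.hsig.ne']
  have hwm : Measurable fun y => ((√M.sig2)⁻¹ • L) *ᵥ (y - M.Xw *ᵥ M.beta) := by
    simp only [Matrix.mulVec_sub]
    exact (Matrix.mulVecLin
      ((√M.sig2)⁻¹ • L)).continuous_of_finiteDimensional.measurable.sub_const _
  have hcm : Measurable fun w : Fin n → ℝ => F fun i => inner ℝ (b i) (WithLp.toLp 2 w) :=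
    hFm.comp (by fun_prop)
  rw [hratio, ← Measure.map_map hcm hwm, CSModel.gaussMeasure,
    map_whiten_gaussDensity _ M.hsig hSL hL, map_orthonormalBasis_coords b hFm,
    map_ratio_pi_gaussianReal hSne hTne hST, betaMeasure_eq, hScard, hTcard]

end
end

section
/- Suppose j ⊆ ω with p_j < p_ω, n > p_ω, the candidate model j is overspecified, and y ~ N_n(X(ω)β*, σ*²Σ). Then E(λ̂) = E(λ̂²) = E(λ̂³) = 1, where λ̂ = ((n−p_j)/(n−p_ω))·(σ̂_ω²/σ̂_j²), λ̂² = ((n−p_j)(n−p_j+2)/((n−p_ω)(n−p_ω+2)))·(σ̂_ω²/σ̂_j²)², and λ̂³ = ((n−p_j)(n−p_j+2)(n−p_j+4)/((n−p_ω)(n−p_ω+2)(n−p_ω+4)))·(σ̂_ω²/σ̂_j²)³. -/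
/-!
With `Q = (σ*²Σ)⁻¹`, the residual matrices `N_ω = 1 - X(ω)L_ω` and `N_j = 1 - X(j)L_j` are
`Q`-orthogonal projections with `N_ω N_j = N_ω`. They annihilate the mean of `y` (for `N_j` this is
overspecification), so `σ̂_ω²/σ̂_j² = U/S` with `U`, `S` the `Q`-norms squared of `N_ω x`, `N_j x`
and `x = y - E y` centred Gaussian with precision matrix `Q`.

For such a projection `N` with `b`-dimensional range, `S = |Nx|²_Q`, and any `h ≥ 0` invariant under
the scalings `x ↦ x + (c-1)Nx`, one has `E[h S^(k+1)] = (b + 2k) E[h S^k]`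
(`gaussI_moment_succ`). This follows from Tonelli applied to
`∫_{t>1} E[h S^(k+1) exp(-(t-1)S/2)] dt` and a linear change of variables, whose determinant
is `c ^ b` by the Weinstein–Aronszajn identity (`det_scale`). Taking `N = N_j` and `h = (U/S)^k`,
then `N = N_ω` and `h = 1`, gives (`gaussI_ratio`)
`E[(U/S)^k] ∏_{i<k} (n - p_j + 2i) = E[U^k] = ∏_{i<k} (n - p_ω + 2i)`,
and the cases `k = 1, 2, 3` are the claim.
-/

open Matrix MeasureTheory Real Filter Asymptotics

noncomputable section

/-! ### The `χ²` moment recursion -/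

/-- The `Q`-quadratic form `(Nx)ᵀQ(Nx)` of the image of `x` under `N`. -/
def qform {n : ℕ} (Q N : Matrix (Fin n) (Fin n) ℝ) (x : Fin n → ℝ) : ℝ :=
  (N *ᵥ x) ⬝ᵥ (Q *ᵥ (N *ᵥ x))

/-- The unnormalised Gaussian integral `∫ f(x) exp(-xᵀQx/2) dx`, as an extended
nonnegative number (only meaningful for `f ≥ 0`). -/
def gaussI {n : ℕ} (Q : Matrix (Fin n) (Fin n) ℝ) (f : (Fin n → ℝ) → ℝ) : ENNReal :=
  ∫⁻ x, ENNReal.ofReal (f x * Real.exp (-(x ⬝ᵥ (Q *ᵥ x)) / 2))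

lemma qform_continuous {n : ℕ} (Q N : Matrix (Fin n) (Fin n) ℝ) : Continuous (qform Q N) := by
  unfold qform
  fun_prop

lemma qform_nonneg {n : ℕ} {Q : Matrix (Fin n) (Fin n) ℝ} (hQ : Q.PosDef)
    (N : Matrix (Fin n) (Fin n) ℝ) (x : Fin n → ℝ) : 0 ≤ qform Q N x := by
  simpa [qform] using hQ.posSemidef.dotProduct_mulVec_nonneg (N *ᵥ x)

lemma qform_ae_ne_zero {n : ℕ} {Q : Matrix (Fin n) (Fin n) ℝ} (hQ : Q.PosDef)
    {N : Matrix (Fin n) (Fin n) ℝ} (hN : N ≠ 0) :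
    ∀ᵐ x : Fin n → ℝ, qform Q N x ≠ 0 := by
  have h0 : volume ((LinearMap.ker (Matrix.mulVecLin N) : Submodule ℝ (Fin n → ℝ)) :
      Set (Fin n → ℝ)) = 0 := by
    apply Measure.addHaar_submodule
    intro h
    apply hN
    rw [LinearMap.ker_eq_top] at h
    ext i j
    have := congrFun (LinearMap.congr_fun h (Pi.single j 1)) i
    simpa using this
  rw [ae_iff]
  refine measure_mono_null ?_ h0
  intro x hx
  have hx : qform Q N x = 0 := not_not.mp hx
  by_contra hne
  have : N *ᵥ x ≠ 0 := by simpa using hne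
  have h2 := hQ.dotProduct_mulVec_pos this
  rw [star_trivial] at h2
  exact h2.ne' hx

lemma lintegral_comp_mulVec {n : ℕ} {D : Matrix (Fin n) (Fin n) ℝ} (hD : D.det ≠ 0)
    {f : (Fin n → ℝ) → ENNReal} (hf : Measurable f) :
    ∫⁻ x, f (D *ᵥ x) = ENNReal.ofReal |D.det⁻¹| * ∫⁻ x, f x := by
  have h := Real.map_matrix_volume_pi_eq_smul_volume_pi hD
  have hm : Measurable (Matrix.toLin' D) := by
    have : Continuous fun x : Fin n → ℝ => D *ᵥ x := by fun_prop
    exact this.measurable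
  calc ∫⁻ x, f (D *ᵥ x) = ∫⁻ x, f x ∂(Measure.map (Matrix.toLin' D) volume) := by
        rw [lintegral_map hf hm]; rfl
    _ = _ := by rw [h, lintegral_smul_measure, smul_eq_mul]

lemma lintegral_Ioi_one_exp {S : ℝ} (hS : 0 < S) :
    ∫⁻ t in Set.Ioi (1 : ℝ), ENNReal.ofReal (S * Real.exp (-((t - 1) * S) / 2)) = 2 := by
  have ha : -S / 2 < 0 := by linarith
  have he : ∀ t : ℝ, S * Real.exp (-((t - 1) * S) / 2)
      = (S * Real.exp (S / 2)) * Real.exp (-S / 2 * t) := by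
    intro t
    rw [mul_assoc, ← Real.exp_add]; ring_nf
  simp_rw [he]
  rw [← ofReal_integral_eq_lintegral_ofReal ((integrableOn_exp_mul_Ioi ha 1).const_mul _)
    (Filter.Eventually.of_forall fun t => by positivity), integral_const_mul,
    integral_exp_mul_Ioi ha]
  have : S * Real.exp (S / 2) * (-Real.exp (-S / 2 * 1) / (-S / 2)) = 2 := by
    have h1 : Real.exp (S / 2) * Real.exp (-S / 2 * 1) = 1 := by
      rw [← Real.exp_add]; ring_nf; simp
    field_simp
    field_simp at h1
    linarith
  rw [this]; simp

lemma lintegral_Ioi_one_rpow {r : ℝ} (hr : 0 < r) :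
    ∫⁻ t in Set.Ioi (1 : ℝ), ENNReal.ofReal (t ^ (-r - 1)) = ENNReal.ofReal r⁻¹ := by
  rw [← ofReal_integral_eq_lintegral_ofReal
    (integrableOn_Ioi_rpow_of_lt (by linarith) one_pos), integral_Ioi_rpow_of_lt (by linarith)
    one_pos]
  · congr 1
    rw [Real.one_rpow, show -r - 1 + 1 = -r by ring, neg_div_neg_eq, one_div]
  · filter_upwards [ae_restrict_mem measurableSet_Ioi] with t ht
    exact Real.rpow_nonneg (zero_le_one.trans (le_of_lt ht)) _

/-- For a projection `N` whose scaling `1 + (c-1)N` has determinant `c ^ b`, and `h`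
invariant under these scalings, the form `S = qform Q N` satisfies the `χ²_b` moment recursion
`E[h S^(k+1)] = (b + 2k) E[h S^k]`. Tonelli is applied to `S^(k+1) exp(-(t-1)S/2) h` on
`t > 1`: integrating in `t` gives `2 S^k h`, while integrating in `x` after the substitution
`x ↦ (1 + (√t-1)N) x` gives a power of `t` times `E[h S^(k+1)]`. -/
lemma gaussI_moment_succ {n b : ℕ} {Q N : Matrix (Fin n) (Fin n) ℝ} (hQ : Q.PosDef)
    (hQN : Nᵀ * Q * N = Q * N) (hNN : N * N = N)
    (hdet : ∀ c : ℝ, 0 < c → (1 + (c - 1) • N).det = c ^ b) (hN : N ≠ 0) (hb : 0 < b)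
    {h : (Fin n → ℝ) → ℝ} (hm : Measurable h) (h0 : ∀ x, 0 ≤ h x)
    (hinv : ∀ c : ℝ, 0 < c → ∀ x, h ((1 + (c - 1) • N) *ᵥ x) = h x) (k : ℕ) :
    gaussI Q (fun x => h x * qform Q N x ^ (k + 1))
      = ENNReal.ofReal (b + 2 * k) * gaussI Q (fun x => h x * qform Q N x ^ k) := by
  set S := qform Q N with hSdef
  have hSm : Measurable S := (qform_continuous Q N).measurable
  have hSnn : ∀ x, 0 ≤ S x := qform_nonneg hQ N
  set G : (Fin n → ℝ) → ℝ := fun x => Real.exp (-(x ⬝ᵥ (Q *ᵥ x)) / 2) with hG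
  have hGm : Measurable G := by
    have : Continuous G := by rw [hG]; fun_prop
    exact this.measurable
  have hQt : Qᵀ = Q := by simpa using hQ.isHermitian.eq
  have hSx : ∀ x, S x = x ⬝ᵥ (Q *ᵥ (N *ᵥ x)) := by
    intro x
    have e : Q *ᵥ (N *ᵥ x) = Nᵀ *ᵥ (Q *ᵥ (N *ᵥ x)) := by
      rw [Matrix.mulVec_mulVec, Matrix.mulVec_mulVec, ← Matrix.mul_assoc, hQN]
    rw [e, Matrix.dotProduct_mulVec x Nᵀ, Matrix.vecMul_transpose]
    rfl
  have hSx' : ∀ x, S x = (N *ᵥ x) ⬝ᵥ (Q *ᵥ x) := by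
    intro x
    rw [hSx, Matrix.dotProduct_mulVec, ← Matrix.mulVec_transpose, hQt, dotProduct_comm]
  have hDx : ∀ (c : ℝ) x, (1 + (c - 1) • N) *ᵥ x = x + (c - 1) • (N *ᵥ x) := by
    intro c x; rw [Matrix.add_mulVec, Matrix.one_mulVec, Matrix.smul_mulVec]
  have hSD : ∀ (c : ℝ) x, S ((1 + (c - 1) • N) *ᵥ x) = c ^ 2 * S x := by
    intro c x
    have : N *ᵥ ((1 + (c - 1) • N) *ᵥ x) = c • (N *ᵥ x) := by
      rw [hDx, Matrix.mulVec_add, Matrix.mulVec_smul, Matrix.mulVec_mulVec, hNN, sub_smul,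
        one_smul, add_sub_cancel]
    simp only [hSdef, qform, this, Matrix.mulVec_smul, smul_dotProduct, dotProduct_smul,
      smul_eq_mul]
    ring
  have hGD : ∀ (c : ℝ) x, G ((1 + (c - 1) • N) *ᵥ x)
      = G x * Real.exp (-((c ^ 2 - 1) * S x) / 2) := by
    intro c x
    rw [hG]
    simp only
    rw [← Real.exp_add, hDx]
    congr 1
    have e1 := hSx x
    have e2 := hSx' x
    have e3 : S x = (N *ᵥ x) ⬝ᵥ (Q *ᵥ (N *ᵥ x)) := rfl
    simp only [Matrix.mulVec_add, Matrix.mulVec_smul, add_dotProduct, dotProduct_add,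
      smul_dotProduct, dotProduct_smul, smul_eq_mul, ← e1, ← e2, ← e3]
    ring
  have hr : (0 : ℝ) < b / 2 + k := by positivity
  -- the `x`-integral at fixed `t`
  have key : ∀ t ∈ Set.Ioi (1 : ℝ),
      ∫⁻ x, ENNReal.ofReal (h x * S x ^ (k + 1) * G x * Real.exp (-((t - 1) * S x) / 2))
        = ENNReal.ofReal (t ^ (-((b : ℝ) / 2 + k) - 1))
          * gaussI Q (fun x => h x * S x ^ (k + 1)) := by
    intro t ht
    have ht0 : (0 : ℝ) < t := zero_lt_one.trans ht
    have hc : 0 < √t := Real.sqrt_pos.mpr ht0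
    have hc2 : √t ^ 2 = t := Real.sq_sqrt ht0.le
    have hdp : 0 < (1 + (√t - 1) • N).det := by rw [hdet _ hc]; positivity
    have hmeas : Measurable fun x => ENNReal.ofReal (h x * S x ^ (k + 1) * G x) := by fun_prop
    have hpt : ∀ x, ENNReal.ofReal (h x * S x ^ (k + 1) * G x * Real.exp (-((t - 1) * S x) / 2))
        = ENNReal.ofReal ((t ^ (k + 1))⁻¹) *
          ENNReal.ofReal (h ((1 + (√t - 1) • N) *ᵥ x) * S ((1 + (√t - 1) • N) *ᵥ x) ^ (k + 1)
            * G ((1 + (√t - 1) • N) *ᵥ x)) := by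
      intro x
      rw [← ENNReal.ofReal_mul (by positivity), hinv _ hc, hSD, hGD, hc2]
      congr 1
      rw [mul_pow]
      field_simp
    simp_rw [hpt]
    rw [lintegral_const_mul, lintegral_comp_mulVec hdp.ne' hmeas,
      abs_of_pos (inv_pos.mpr hdp), ← mul_assoc,
      ← ENNReal.ofReal_mul (by positivity), hdet _ hc]
    · congr 2
      rw [← Real.rpow_natCast, ← Real.rpow_natCast, ← Real.rpow_neg ht0.le,
        ← Real.rpow_neg hc.le, Real.sqrt_eq_rpow, ← Real.rpow_mul ht0.le, ← Real.rpow_add ht0]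
      congr 1
      push_cast
      ring
    · refine hmeas.comp ?_
      have : Continuous fun x : Fin n → ℝ => (1 + (√t - 1) • N) *ᵥ x := by fun_prop
      exact this.measurable
  have hleft : 2 * gaussI Q (fun x => h x * S x ^ k)
      = ∫⁻ x, ∫⁻ t in Set.Ioi (1 : ℝ),
        ENNReal.ofReal (h x * S x ^ (k + 1) * G x * Real.exp (-((t - 1) * S x) / 2)) := by
    rw [gaussI, ← lintegral_const_mul _ (by fun_prop)]
    refine lintegral_congr_ae ?_
    filter_upwards [qform_ae_ne_zero hQ hN] with x hx
    have hpos : 0 < S x := lt_of_le_of_ne (hSnn x) (Ne.symm hx)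
    have hnn : 0 ≤ h x * S x ^ k * G x :=
      mul_nonneg (mul_nonneg (h0 x) (pow_nonneg (hSnn x) _)) (Real.exp_nonneg _)
    have : ∀ t : ℝ, ENNReal.ofReal (h x * S x ^ (k + 1) * G x * Real.exp (-((t - 1) * S x) / 2))
        = ENNReal.ofReal (h x * S x ^ k * G x)
          * ENNReal.ofReal (S x * Real.exp (-((t - 1) * S x) / 2)) := by
      intro t
      rw [← ENNReal.ofReal_mul hnn]
      congr 1
      ring
    simp_rw [this]
    rw [lintegral_const_mul _ (by fun_prop), lintegral_Ioi_one_exp hpos, mul_comm]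
  have hswap : 2 * gaussI Q (fun x => h x * S x ^ k)
      = ENNReal.ofReal ((b : ℝ) / 2 + k)⁻¹ * gaussI Q (fun x => h x * S x ^ (k + 1)) := by
    rw [hleft, lintegral_lintegral_swap, setLIntegral_congr_fun measurableSet_Ioi key,
      lintegral_mul_const _ (by fun_prop), lintegral_Ioi_one_rpow hr]
    simp only [Function.uncurry_def]
    fun_prop
  rw [show (b : ℝ) + 2 * k = (b / 2 + k) * 2 by ring, ENNReal.ofReal_mul hr.le,
    ENNReal.ofReal_ofNat, mul_assoc, hswap, ← mul_assoc, ← ENNReal.ofReal_mul hr.le,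
    mul_inv_cancel₀ hr.ne', ENNReal.ofReal_one, one_mul]

/-! ### Normalisation and moments of the ratio -/

open scoped MatrixOrder in
/-- The Gaussian normalising constant, obtained by factoring `Q = BᵀB` and substituting `Bx`. -/
lemma gaussI_one {n : ℕ} {Q : Matrix (Fin n) (Fin n) ℝ} (hQ : Q.PosDef) :
    gaussI Q (fun _ => 1) = ENNReal.ofReal (√((2 * π) ^ n * Q.det⁻¹)) := by
  obtain ⟨B, hB⟩ := CStarAlgebra.nonneg_iff_eq_star_mul_self.mp hQ.posSemidef.nonneg
  have hB' : Q = Bᵀ * B := by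
    rw [hB, Matrix.star_eq_conjTranspose, Matrix.conjTranspose_eq_transpose_of_trivial]
  have hdetQ : Q.det = B.det ^ 2 := by rw [hB', Matrix.det_mul, Matrix.det_transpose, sq]
  have hBdet : B.det ≠ 0 := by
    intro h
    have := hQ.det_pos
    rw [hdetQ, h] at this
    simp at this
  have hfm : Measurable fun x : Fin n → ℝ => ENNReal.ofReal (Real.exp (-(x ⬝ᵥ x) / 2)) := by
    have : Continuous fun x : Fin n → ℝ => Real.exp (-(x ⬝ᵥ x) / 2) := by fun_prop
    exact this.measurable.ennreal_ofReal
  have h1 : ∀ x : Fin n → ℝ, x ⬝ᵥ (Q *ᵥ x) = (B *ᵥ x) ⬝ᵥ (B *ᵥ x) := by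
    intro x
    rw [hB', ← Matrix.mulVec_mulVec, Matrix.dotProduct_mulVec, Matrix.vecMul_transpose]
  have h2 : ∫⁻ x : Fin n → ℝ, ENNReal.ofReal (Real.exp (-(x ⬝ᵥ x) / 2))
      = ENNReal.ofReal (√(2 * π) ^ n) := by
    have e : ∀ x : Fin n → ℝ, Real.exp (-(x ⬝ᵥ x) / 2)
        = ∏ i, Real.exp (-(1 / 2) * (x i) ^ 2) := by
      intro x
      rw [← Real.exp_sum, dotProduct, ← Finset.mul_sum]
      congr 1
      simp_rw [← sq]
      ring
    simp_rw [e]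
    rw [← ofReal_integral_eq_lintegral_ofReal]
    · rw [integral_fintype_prod_volume_eq_pow (fun x : ℝ => Real.exp (-(1 / 2) * x ^ 2)),
        integral_gaussian, Fintype.card_fin]
      congr 4
      ring
    · exact Integrable.fintype_prod fun _ => integrable_exp_neg_mul_sq (by norm_num)
    · exact Filter.Eventually.of_forall fun x => Finset.prod_nonneg fun _ _ => Real.exp_nonneg _
  unfold gaussI
  simp_rw [one_mul, h1]
  rw [lintegral_comp_mulVec hBdet hfm, h2, ← ENNReal.ofReal_mul (abs_nonneg _)]
  congr 1
  rw [hdetQ, Real.sqrt_mul (show 0 ≤ (2 * π) ^ n by positivity), ← inv_pow, Real.sqrt_sq_eq_abs, mul_comm]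
  congr 1
  rw [eq_comm, Real.sqrt_eq_iff_mul_self_eq (by positivity) (by positivity), ← mul_pow,
    Real.mul_self_sqrt (by positivity)]

/-- The iterated form of `gaussI_moment_succ`. -/
lemma gaussI_moment {n b : ℕ} {Q N : Matrix (Fin n) (Fin n) ℝ} (hQ : Q.PosDef)
    (hQN : Nᵀ * Q * N = Q * N) (hNN : N * N = N)
    (hdet : ∀ c : ℝ, 0 < c → (1 + (c - 1) • N).det = c ^ b) (hN : N ≠ 0) (hb : 0 < b)
    {h : (Fin n → ℝ) → ℝ} (hm : Measurable h) (h0 : ∀ x, 0 ≤ h x)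
    (hinv : ∀ c : ℝ, 0 < c → ∀ x, h ((1 + (c - 1) • N) *ᵥ x) = h x) (k : ℕ) :
    gaussI Q (fun x => h x * qform Q N x ^ k)
      = ENNReal.ofReal (∏ i ∈ Finset.range k, ((b : ℝ) + 2 * i)) * gaussI Q h := by
  induction k with
  | zero => simp
  | succ k ih =>
    rw [gaussI_moment_succ hQ hQN hNN hdet hN hb hm h0 hinv, ih, ← mul_assoc,
      ← ENNReal.ofReal_mul (by positivity), Finset.prod_range_succ, mul_comm (∏ _ ∈ _, _)]

/-- Moments of the ratio `qform Q N₁ / qform Q N₂` for nested projections (`N₁ N₂ = N₁`): the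
ratio is invariant under scaling by `N₂`, so `E[ratio^k]` is the quotient of the `k`-th moments
of numerator and denominator. -/
lemma gaussI_ratio {n a b : ℕ} {Q N₁ N₂ : Matrix (Fin n) (Fin n) ℝ} (hQ : Q.PosDef)
    (hQ₁ : N₁ᵀ * Q * N₁ = Q * N₁) (hN₁ : N₁ * N₁ = N₁)
    (hdet₁ : ∀ c : ℝ, 0 < c → (1 + (c - 1) • N₁).det = c ^ a) (hN₁0 : N₁ ≠ 0) (ha : 0 < a)
    (hQ₂ : N₂ᵀ * Q * N₂ = Q * N₂) (hN₂ : N₂ * N₂ = N₂)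
    (hdet₂ : ∀ c : ℝ, 0 < c → (1 + (c - 1) • N₂).det = c ^ b) (hN₂0 : N₂ ≠ 0) (hb : 0 < b)
    (h12 : N₁ * N₂ = N₁) (k : ℕ) :
    gaussI Q (fun x => (qform Q N₁ x / qform Q N₂ x) ^ k)
      = ENNReal.ofReal ((∏ i ∈ Finset.range k, ((a : ℝ) + 2 * i))
          / (∏ i ∈ Finset.range k, ((b : ℝ) + 2 * i)) * √((2 * π) ^ n * Q.det⁻¹)) := by
  have hscale : ∀ {N : Matrix (Fin n) (Fin n) ℝ}, N * N₂ = N → ∀ (c : ℝ) x,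
      qform Q N ((1 + (c - 1) • N₂) *ᵥ x) = c ^ 2 * qform Q N x := by
    intro N hN c x
    have : N *ᵥ ((1 + (c - 1) • N₂) *ᵥ x) = c • (N *ᵥ x) := by
      rw [Matrix.mulVec_mulVec, Matrix.mul_add, Matrix.mul_one, Matrix.mul_smul, hN,
        Matrix.add_mulVec, Matrix.smul_mulVec, sub_smul, one_smul, add_sub_cancel]
    simp only [qform, this, Matrix.mulVec_smul, smul_dotProduct, dotProduct_smul, smul_eq_mul]
    ring
  have m₁ := (qform_continuous Q N₁).measurable
  have m₂ := (qform_continuous Q N₂).measurable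
  have e2 := gaussI_moment hQ hQ₂ hN₂ hdet₂ hN₂0 hb
    (h := fun x => (qform Q N₁ x / qform Q N₂ x) ^ k) (by fun_prop)
    (fun x => pow_nonneg (div_nonneg (qform_nonneg hQ _ _) (qform_nonneg hQ _ _)) _)
    (fun c hc x => by
      rw [hscale h12, hscale hN₂, mul_div_mul_left _ _ (by positivity)]) k
  have e1 := gaussI_moment hQ hQ₁ hN₁ hdet₁ hN₁0 ha (h := fun _ => 1) measurable_const
    (fun _ => zero_le_one) (fun _ _ _ => rfl) k
  have e3 : gaussI Q (fun x => (qform Q N₁ x / qform Q N₂ x) ^ k * qform Q N₂ x ^ k)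
      = gaussI Q (fun x => 1 * qform Q N₁ x ^ k) := by
    refine lintegral_congr_ae ?_
    filter_upwards [qform_ae_ne_zero hQ hN₂0] with x hx
    rw [← mul_pow, div_mul_cancel₀ _ hx, one_mul]
  have hA : 0 ≤ ∏ i ∈ Finset.range k, ((a : ℝ) + 2 * i) := by positivity
  have hB : 0 < ∏ i ∈ Finset.range k, ((b : ℝ) + 2 * i) := by positivity
  rw [e3, e1, gaussI_one hQ, ← ENNReal.ofReal_mul hA] at e2
  rw [div_mul_eq_mul_div, ENNReal.ofReal_div_of_pos hB, e2, mul_comm,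
    ENNReal.mul_div_cancel_right (by simpa using hB) ENNReal.ofReal_ne_top]

/-! ### Residual projections of generalised least squares -/

/-- By the Weinstein–Aronszajn identity, scaling by `c` along the complementary projection
`1 - XL` of a rank-`p` projection `XL` has determinant `c ^ (n - p)`. -/
lemma det_scale {n p b : ℕ} {X : Matrix (Fin n) (Fin p) ℝ} {L : Matrix (Fin p) (Fin n) ℝ}
    (hLX : L * X = 1) (hn : n = p + b) (c : ℝ) (hc : 0 < c) :
    (1 + (c - 1) • (1 - X * L)).det = c ^ b := by
  have e : (1 + (c - 1) • (1 - X * L) : Matrix (Fin n) (Fin n) ℝ)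
      = c • (1 - (((c - 1) / c) • X) * L) := by
    rw [Matrix.smul_mul, smul_sub c, smul_smul, mul_div_cancel₀ _ hc.ne', smul_sub, sub_smul c 1 1,
      one_smul]
    abel
  have e2 : (1 - ((c - 1) / c) • (1 : Matrix (Fin p) (Fin p) ℝ)) = c⁻¹ • 1 := by
    rw [← one_smul ℝ (1 : Matrix (Fin p) (Fin p) ℝ), smul_smul, ← sub_smul, smul_smul]
    congr 1
    field_simp
    ring
  rw [e, Matrix.det_smul, Matrix.det_one_sub_mul_comm, Matrix.mul_smul, hLX, e2, Matrix.det_smul,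
    Matrix.det_one, Fintype.card_fin, Fintype.card_fin, hn, pow_add, mul_one, inv_pow]
  field_simp

lemma one_sub_ne_zero {n p b : ℕ} {X : Matrix (Fin n) (Fin p) ℝ} {L : Matrix (Fin p) (Fin n) ℝ}
    (hLX : L * X = 1) (hn : n = p + b) (hb : 0 < b) : 1 - X * L ≠ 0 := by
  intro h
  have h1 := congrArg Matrix.trace (sub_eq_zero.mp h)
  rw [Matrix.trace_mul_comm, hLX, Matrix.trace_one, Matrix.trace_one, Fintype.card_fin,
    Fintype.card_fin] at h1
  have : n = p := by exact_mod_cast h1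
  omega

lemma gls_mul_design {n p : ℕ} {Q : Matrix (Fin n) (Fin n) ℝ} (hQ : Q.PosDef)
    {X : Matrix (Fin n) (Fin p) ℝ} (hX : X.rank = p) :
    ((Xᵀ * Q * X)⁻¹ * Xᵀ * Q) * X = 1 := by
  have hinj : Function.Injective X.mulVec := by
    have hk : LinearMap.ker X.mulVecLin = ⊥ := by
      have := LinearMap.finrank_range_add_finrank_ker X.mulVecLin
      rw [← Matrix.rank, hX] at this
      rw [← Submodule.finrank_eq_zero (R := ℝ)]
      simpa using this
    exact LinearMap.ker_eq_bot.mp hk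
  have hP := hQ.conjTranspose_mul_mul_same hinj
  rw [Matrix.conjTranspose_eq_transpose_of_trivial] at hP
  rw [Matrix.mul_assoc, Matrix.mul_assoc, ← Matrix.mul_assoc Xᵀ]
  exact Matrix.nonsing_inv_mul _ ((Matrix.isUnit_iff_isUnit_det _).mp hP.isUnit)

/-- The residual matrix `1 - XL` is self-adjoint for the inner product given by `Q`. -/
lemma residual_transpose_mul {n p : ℕ} {Q : Matrix (Fin n) (Fin n) ℝ} (hQ : Q.PosDef)
    (X : Matrix (Fin n) (Fin p) ℝ) :
    (1 - X * ((Xᵀ * Q * X)⁻¹ * Xᵀ * Q))ᵀ * Q = Q * (1 - X * ((Xᵀ * Q * X)⁻¹ * Xᵀ * Q)) := by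
  have hQt : Qᵀ = Q := by simpa using hQ.isHermitian.eq
  simp only [Matrix.transpose_sub, Matrix.transpose_mul, Matrix.transpose_one,
    Matrix.transpose_nonsing_inv, Matrix.transpose_transpose, hQt, Matrix.sub_mul,
    Matrix.mul_sub, Matrix.one_mul, Matrix.mul_one, Matrix.mul_assoc]

lemma residual_idem {n p : ℕ} {X : Matrix (Fin n) (Fin p) ℝ} {L : Matrix (Fin p) (Fin n) ℝ}
    (hLX : L * X = 1) : (1 - X * L) * (1 - X * L) = 1 - X * L := by
  have : X * L * (X * L) = X * L := by
    rw [Matrix.mul_assoc, ← Matrix.mul_assoc L, hLX, Matrix.one_mul]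
  rw [Matrix.mul_sub, Matrix.sub_mul, Matrix.sub_mul, this]
  simp

/-! ### Application to the mixed model -/

namespace CSModel

variable {pw pj n : ℕ} (M : CSModel pw pj n)

lemma Sig_posDef : M.Sig.PosDef := by
  have h := M.hG.posSemidef.mul_mul_conjTranspose_same M.Z
  rw [Matrix.conjTranspose_eq_transpose_of_trivial] at h
  exact Matrix.PosDef.posSemidef_add h M.hR

lemma Xj_eq : M.Xj = M.Xw * (1 : Matrix (Fin pw) (Fin pw) ℝ).submatrix id M.emb := by
  rw [Xj]
  ext i j
  simp [Matrix.mul_apply, Matrix.one_apply]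

/-- The moments of the ratio of variance estimators are those of a
`Beta((n - pw)/2, (pw - pj)/2)` variable. -/
lemma E_ratio (hover : M.Overspec) (hpj : pj < pw) (hpw : pw < n) (k : ℕ) :
    M.E (fun y => (M.sigHatw2 y / M.sigHat2 y) ^ k)
      = (∏ i ∈ Finset.range k, ((n : ℝ) - pw + 2 * i))
          / (∏ i ∈ Finset.range k, ((n : ℝ) - pj + 2 * i)) := by
  obtain ⟨a, ha⟩ := Nat.exists_eq_add_of_le hpw.le
  obtain ⟨b, hb⟩ := Nat.exists_eq_add_of_le (hpj.trans hpw).le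
  have ha0 : 0 < a := by omega
  have hb0 : 0 < b := by omega
  have hs := M.hsig
  have hS := M.Sig_posDef
  have hQ := hS.inv
  have hLw : M.glsw * M.Xw = 1 := gls_mul_design hQ M.hrankw
  have hLj : M.gls * M.Xj = 1 := gls_mul_design hQ M.hrankj
  set N₁ := 1 - M.Xw * M.glsw with hN₁
  set N₂ := 1 - M.Xj * M.gls with hN₂
  have hX₁ : N₁ * M.Xw = 0 := by
    rw [hN₁, Matrix.sub_mul, Matrix.mul_assoc, hLw, Matrix.one_mul, Matrix.mul_one, sub_self]
  have hX₂ : N₂ * M.Xj = 0 := by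
    rw [hN₂, Matrix.sub_mul, Matrix.mul_assoc, hLj, Matrix.one_mul, Matrix.mul_one, sub_self]
  have h12 : N₁ * N₂ = N₁ := by
    rw [hN₂, Matrix.mul_sub, Matrix.mul_one, ← Matrix.mul_assoc, Xj_eq, ← Matrix.mul_assoc, hX₁,
      Matrix.zero_mul, Matrix.zero_mul, sub_zero]
  have hid₁ : N₁ * N₁ = N₁ := residual_idem hLw
  have hid₂ : N₂ * N₂ = N₂ := residual_idem hLj
  -- the precision matrix of `y`
  set Q := M.sig2⁻¹ • M.Sig⁻¹ with hQdef
  have hQ' : Q.PosDef := hQ.smul (inv_pos.mpr hs)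
  have hQ₁ : N₁ᵀ * Q * N₁ = Q * N₁ := by
    have : N₁ᵀ * M.Sig⁻¹ = M.Sig⁻¹ * N₁ := residual_transpose_mul hQ M.Xw
    rw [hQdef, Matrix.mul_smul, this, Matrix.smul_mul, Matrix.smul_mul, Matrix.mul_assoc, hid₁]
  have hQ₂ : N₂ᵀ * Q * N₂ = Q * N₂ := by
    have : N₂ᵀ * M.Sig⁻¹ = M.Sig⁻¹ * N₂ := residual_transpose_mul hQ M.Xj
    rw [hQdef, Matrix.mul_smul, this, Matrix.smul_mul, Matrix.smul_mul, Matrix.mul_assoc, hid₂]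
  have hmain := gaussI_ratio hQ' hQ₁ hid₁ (det_scale hLw ha) (one_sub_ne_zero hLw ha ha0) ha0
    hQ₂ hid₂ (det_scale hLj hb) (one_sub_ne_zero hLj hb hb0) hb0 h12 k
  set mu := M.Xw *ᵥ M.beta with hmu
  have hn0 : (n : ℝ) ≠ 0 := by
    have : n ≠ 0 := by omega
    exact_mod_cast this
  have hres₁ : ∀ y, M.residw y = N₁ *ᵥ (y - mu) := by
    intro y
    have : N₁ *ᵥ mu = 0 := by rw [hmu, Matrix.mulVec_mulVec, hX₁, Matrix.zero_mulVec]
    rw [Matrix.mulVec_sub, this, sub_zero, hN₁, Matrix.sub_mulVec, Matrix.one_mulVec,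
      ← Matrix.mulVec_mulVec]
    rfl
  have hres₂ : ∀ y, M.resid y = N₂ *ᵥ (y - mu) := by
    intro y
    have : N₂ *ᵥ mu = 0 := by
      obtain ⟨c, hc⟩ := hover
      rw [hmu, hc, Matrix.mulVec_mulVec, hX₂, Matrix.zero_mulVec]
    rw [Matrix.mulVec_sub, this, sub_zero, hN₂, Matrix.sub_mulVec, Matrix.one_mulVec,
      ← Matrix.mulVec_mulVec]
    rfl
  have hratio : ∀ y, M.sigHatw2 y / M.sigHat2 y
      = qform Q N₁ (y - mu) / qform Q N₂ (y - mu) := by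
    intro y
    rw [sigHatw2, sigHat2, hres₁, hres₂, div_div_div_cancel_right₀ hn0]
    simp only [qform, hQdef, Matrix.smul_mulVec, dotProduct_smul, smul_eq_mul]
    rw [mul_div_mul_left _ _ (inv_pos.mpr hs).ne']
  set Zc := √((2 * π) ^ n * Q.det⁻¹) with hZ
  have hdetQ : 0 < Q.det := hQ'.det_pos
  have hZpos : 0 < Zc := Real.sqrt_pos.mpr (by positivity)
  have hdens : ∀ y, gaussDensity mu M.sig2 M.Sig y
      = Real.exp (-((y - mu) ⬝ᵥ (Q *ᵥ (y - mu))) / 2) / Zc := by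
    intro y
    rw [gaussDensity]
    congr 2
    · rw [hQdef, Matrix.smul_mulVec, dotProduct_smul, smul_eq_mul]
      field_simp
    · rw [hQdef, Matrix.det_smul, Fintype.card_fin, Matrix.det_nonsing_inv,
        Ring.inverse_eq_inv', mul_inv, inv_inv, inv_pow, inv_inv, mul_pow _ M.sig2, mul_assoc]
  have hE : M.E (fun y => (M.sigHatw2 y / M.sigHat2 y) ^ k)
      = (∫ x, (qform Q N₁ x / qform Q N₂ x) ^ k * Real.exp (-(x ⬝ᵥ (Q *ᵥ x)) / 2)) / Zc := by
    rw [E, ← integral_sub_right_eq_self (fun x => (qform Q N₁ x / qform Q N₂ x) ^ k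
      * Real.exp (-(x ⬝ᵥ (Q *ᵥ x)) / 2)) mu, ← integral_div]
    refine integral_congr_ae (Filter.Eventually.of_forall fun y => ?_)
    simp only
    rw [hratio, hdens, mul_div_assoc]
  have m₁ := (qform_continuous Q N₁).measurable
  have m₂ := (qform_continuous Q N₂).measurable
  have mG : Measurable fun x : Fin n → ℝ => Real.exp (-(x ⬝ᵥ (Q *ᵥ x)) / 2) := by
    have : Continuous fun x : Fin n → ℝ => Real.exp (-(x ⬝ᵥ (Q *ᵥ x)) / 2) := by fun_prop
    exact this.measurable
  rw [gaussI] at hmain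
  rw [hE, integral_eq_lintegral_of_nonneg_ae
    (Filter.Eventually.of_forall fun x => mul_nonneg
      (pow_nonneg (div_nonneg (qform_nonneg hQ' _ _) (qform_nonneg hQ' _ _)) _)
      (Real.exp_nonneg _)) (by fun_prop), hmain,
    ENNReal.toReal_ofReal (by positivity), mul_div_assoc, div_self hZpos.ne', mul_one]
  have ea : (n : ℝ) - pw = a := by rw [ha]; push_cast; ring
  have eb : (n : ℝ) - pj = b := by rw [hb]; push_cast; ring
  rw [ea, eb]

end CSModel

open CSModel in
theorem stmt16 {pw pj n : ℕ} (M : CSModel pw pj n)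
    (hover : M.Overspec) (hpj : pj < pw) (hpw : pw < n) :
    M.E M.lamHat = 1 ∧ M.E M.lamHat2 = 1 ∧ M.E M.lamHat3 = 1 := by
  have h1 := M.E_ratio hover hpj hpw 1
  have h2 := M.E_ratio hover hpj hpw 2
  have h3 := M.E_ratio hover hpj hpw 3
  have hw : (0 : ℝ) < (n : ℝ) - pw := sub_pos.mpr (by exact_mod_cast hpw)
  have hj : (0 : ℝ) < (n : ℝ) - pj := sub_pos.mpr (by exact_mod_cast hpj.trans hpw)
  have hmul : ∀ (c : ℝ) (f : (Fin n → ℝ) → ℝ), M.E (fun y => c * f y) = c * M.E f := by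
    intro c f
    simp only [CSModel.E, mul_assoc]
    exact integral_const_mul _ _
  norm_num [Finset.prod_range_succ] at h1 h2 h3
  refine ⟨?_, ?_, ?_⟩
  · unfold lamHat
    rw [hmul, h1]
    field_simp
  · unfold lamHat2
    rw [hmul, h2]
    field_simp
  · unfold lamHat3
    rw [hmul, h3]
    field_simp

end
end
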